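/- arXiv:2312.08842 — 11 statements merged into one kernel-verified Lean document; each statement's English description precedes it below -/
import Mathlib

section
/- Let k, l ∈ ℂ, set m = k/2 − l, and let s₁,…,s_{d₀} ∈ ℂ∖{0,1} be pairwise distinct and t₁,…,t_{d₁} ∈ ℂ∖{0} be pairwise distinct with s_i ≠ t_j for all i, j, satisfying the Gaudin Bethe Ansatz Equations (BLZ case): for each i = 1,…,d₀, (1/2)/(s_i−1) + m/s_i + ∑_{j=1}^{d₁} 1/(s_i−t_j) − ∑_{j≠i} 1/(s_i−s_j) = 0, and for each i = 1,…,d₁, l/t_i + ∑_{j=1}^{d₀} 1/(t_i−s_j) − ∑_{j≠i} 1/(t_i−t_j) = 0. Then, with r = d₀ − d₁, the identity ∑_{i=1}^{d₀} s_i/(s_i−1) = −d₀(k+2) + r(r+1) + 2·l·r holds. -/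
open Finset

/-!
Multiply each equation by its own root and add up all of them. An interaction term then meets its
mirror image, and the two contribute the constant `x / (x - y) + y / (y - x) = 1`. So the
interactions only count pairs of roots, and what remains is the weighted sum of the external terms.
-/

section PairSums

variable {K ι κ : Type*} [Field K] [Fintype ι] [Fintype κ]

lemma div_sub_add_div_sub_swap {x y : K} (hxy : x ≠ y) : x / (x - y) + y / (y - x) = 1 := by
  rw [← neg_sub x y, div_neg, ← sub_eq_add_neg, ← sub_div, div_self (sub_ne_zero.2 hxy)]

lemma sum_mul_sum_one_div_sub_add_swap {x : ι → K} {y : κ → K} (hxy : ∀ i j, x i ≠ y j) :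
    ∑ i, x i * ∑ j, 1 / (x i - y j) + ∑ j, y j * ∑ i, 1 / (y j - x i)
      = Fintype.card ι * Fintype.card κ := by
  simp only [mul_sum, mul_one_div]
  calc ∑ i, ∑ j, x i / (x i - y j) + ∑ j, ∑ i, y j / (y j - x i)
      = ∑ i, ∑ j, (x i / (x i - y j) + y j / (y j - x i)) := by
        rw [sum_comm (s := (univ : Finset κ))]
        simp only [sum_add_distrib]
    _ = ∑ _i : ι, ∑ _j : κ, 1 := by
        simp only [div_sub_add_div_sub_swap (hxy _ _)]
    _ = Fintype.card ι * Fintype.card κ := by simp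

lemma two_mul_sum_mul_sum_erase_one_div_sub [DecidableEq ι] {x : ι → K}
    (hx : Function.Injective x) :
    2 * ∑ i, x i * ∑ j ∈ univ.erase i, 1 / (x i - x j)
      = Fintype.card ι * (Fintype.card ι - 1 : K) := by
  simp only [mul_sum (univ.erase _), mul_one_div]
  have swap : ∑ i, ∑ j ∈ univ.erase i, x i / (x i - x j)
      = ∑ i, ∑ j ∈ univ.erase i, x j / (x j - x i) :=
    sum_comm' fun i j => by simp [eq_comm]
  have card_erase (i : ι) : (#(univ.erase i) : K) = Fintype.card ι - 1 := by
    rw [cast_card_erase_of_mem (mem_univ i), card_univ]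
  calc 2 * ∑ i, ∑ j ∈ univ.erase i, x i / (x i - x j)
      = ∑ i, ∑ j ∈ univ.erase i, (x i / (x i - x j) + x j / (x j - x i)) := by
        simp only [sum_add_distrib]
        rw [← swap, two_mul]
    _ = ∑ i, ∑ _j ∈ univ.erase i, 1 :=
        sum_congr rfl fun i _ => sum_congr rfl fun j hj =>
          div_sub_add_div_sub_swap (hx.ne (ne_of_mem_erase hj).symm)
    _ = Fintype.card ι * (Fintype.card ι - 1 : K) := by
        simp only [sum_const, nsmul_eq_mul, mul_one, card_erase, card_univ]

end PairSums

section BetheAnsatz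

variable {K ι κ : Type*} [Field K] [Fintype ι] [Fintype κ] [DecidableEq ι] [DecidableEq κ]
  {s : ι → K} {t : κ → K}

lemma two_mul_sum_mul_add_sum_mul_of_bethe_equations {u : ι → K} {v : κ → K}
    (hs_inj : Function.Injective s) (ht_inj : Function.Injective t) (hst : ∀ i j, s i ≠ t j)
    (hs : ∀ i, u i + ∑ j, 1 / (s i - t j) - ∑ j ∈ univ.erase i, 1 / (s i - s j) = 0)
    (ht : ∀ j, v j + ∑ i, 1 / (t j - s i) - ∑ i ∈ univ.erase j, 1 / (t j - t i) = 0) :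
    2 * (∑ i, s i * u i + ∑ j, t j * v j)
      = (Fintype.card ι - Fintype.card κ : K) ^ 2 - Fintype.card ι - Fintype.card κ := by
  have sum_s : ∑ i, s i * u i + ∑ i, s i * ∑ j, 1 / (s i - t j)
      - ∑ i, s i * ∑ j ∈ univ.erase i, 1 / (s i - s j) = 0 := by
    simp only [← sum_add_distrib, ← sum_sub_distrib, ← mul_add, ← mul_sub, hs, mul_zero,
      sum_const_zero]
  have sum_t : ∑ j, t j * v j + ∑ j, t j * ∑ i, 1 / (t j - s i)
      - ∑ j, t j * ∑ i ∈ univ.erase j, 1 / (t j - t i) = 0 := by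
    simp only [← sum_add_distrib, ← sum_sub_distrib, ← mul_add, ← mul_sub, ht, mul_zero,
      sum_const_zero]
  linear_combination 2 * sum_s + 2 * sum_t - 2 * sum_mul_sum_one_div_sub_add_swap hst
    + two_mul_sum_mul_sum_erase_one_div_sub hs_inj + two_mul_sum_mul_sum_erase_one_div_sub ht_inj

theorem gaudin_BAE_at_infinity_general [NeZero (2 : K)] {k l : K}
    (hs_inj : Function.Injective s) (ht_inj : Function.Injective t)
    (hs0 : ∀ i, s i ≠ 0) (_hs1 : ∀ i, s i ≠ 1) (ht0 : ∀ j, t j ≠ 0) (hst : ∀ i j, s i ≠ t j)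
    (hBAE1 : ∀ i, (1 / 2) / (s i - 1) + (k / 2 - l) / s i
      + ∑ j, 1 / (s i - t j) - ∑ j ∈ univ.erase i, 1 / (s i - s j) = 0)
    (hBAE2 : ∀ j, l / t j + ∑ i, 1 / (t j - s i)
      - ∑ i ∈ univ.erase j, 1 / (t j - t i) = 0) :
    ∑ i, s i / (s i - 1)
      = -(Fintype.card ι : K) * (k + 2)
        + (Fintype.card ι - Fintype.card κ : K) * ((Fintype.card ι - Fintype.card κ : K) + 1)
        + 2 * l * (Fintype.card ι - Fintype.card κ : K) := by
  have external_s : ∑ i, s i * ((1 / 2) / (s i - 1) + (k / 2 - l) / s i)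
      = 1 / 2 * ∑ i, s i / (s i - 1) + Fintype.card ι * (k / 2 - l) := by
    simp only [mul_add, mul_div_cancel₀ _ (hs0 _), sum_add_distrib, sum_const, card_univ,
      nsmul_eq_mul, mul_sum, mul_div_left_comm (s _)]
  have external_t : ∑ j, t j * (l / t j) = Fintype.card κ * l := by
    simp only [mul_div_cancel₀ _ (ht0 _), sum_const, card_univ, nsmul_eq_mul]
  have virial :=
    two_mul_sum_mul_add_sum_mul_of_bethe_equations hs_inj ht_inj hst hBAE1 hBAE2
  rw [external_s, external_t] at virial
  field_simp at virial
  linear_combination virial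

end BetheAnsatz

/-- Lemma 3.2 ("at infinity" identity) for the Gaudin Bethe Ansatz Equations in the BLZ case:
for a solution `s`, `t` of the BAE with `m = k/2 - l`, one has
`∑ i, s i / (s i - 1) = -d₀(k+2) + r(r+1) + 2 l r` where `r = d₀ - d₁`. -/
theorem gaudin_BAE_at_infinity (k l : ℂ) (d₀ d₁ : ℕ)
    (s : Fin d₀ → ℂ) (t : Fin d₁ → ℂ)
    (hs_inj : Function.Injective s) (ht_inj : Function.Injective t)
    (hs0 : ∀ i, s i ≠ 0) (hs1 : ∀ i, s i ≠ 1) (ht0 : ∀ j, t j ≠ 0)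
    (hst : ∀ i j, s i ≠ t j)
    (hBAE1 : ∀ i, (1/2) / (s i - 1) + (k/2 - l) / s i
      + ∑ j, 1 / (s i - t j) - ∑ j ∈ univ.erase i, 1 / (s i - s j) = 0)
    (hBAE2 : ∀ i, l / t i + ∑ j, 1 / (t i - s j)
      - ∑ j ∈ univ.erase i, 1 / (t i - t j) = 0) :
    ∑ i, s i / (s i - 1)
      = -(d₀ : ℂ) * (k + 2) + ((d₀ : ℂ) - (d₁ : ℂ)) * (((d₀ : ℂ) - (d₁ : ℂ)) + 1)
        + 2 * l * ((d₀ : ℂ) - (d₁ : ℂ)) := by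
  simpa only [Fintype.card_fin] using
    gaudin_BAE_at_infinity_general hs_inj ht_inj hs0 hs1 ht0 hst hBAE1 hBAE2
end

section
/- Let n ≥ 1, let z₁,…,z_n ∈ ℂ be pairwise distinct, let m₁,…,m_n, l₁,…,l_n, n₀, n₁ ∈ ℂ. Let s₁,…,s_{d₀} be pairwise distinct, t₁,…,t_{d₁} be pairwise distinct, with all s_i, t_j distinct from each other and from all z_a, satisfying the exponential Gaudin Bethe Ansatz Equations: for each i, ∑_a m_a/(s_i−z_a) + ∑_j 1/(s_i−t_j) − ∑_{j≠i} 1/(s_i−s_j) + n₀ = 0, and for each i, ∑_a l_a/(t_i−z_a) + ∑_j 1/(t_i−s_j) − ∑_{j≠i} 1/(t_i−t_j) + n₁ = 0. Define a₋(x) = −( n₁ + ∑_a l_a/(x−z_a) + ∑_i 1/(x−s_i) − ∑_j 1/(x−t_j) ). Then for every x ∈ ℂ distinct from all z_a, s_i, t_j one has a₋(x)² + a₋′(x) = n₁² + ∑_a (l_a² + l_a)/(x−z_a)² + ∑_i 2/(x−s_i)² + ∑_a A_a/(x−z_a) + ∑_i p_i/(x−s_i), where p_i = 2(n₀+n₁)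 + ∑_a (2m_a+2l_a)/(s_i−z_a) and A_a = 2 n₁ l_a + ∑_{b≠a} 2 l_a l_b/(z_a−z_b) − 2 l_a ( ∑_j 1/(z_a−t_j) − ∑_i 1/(z_a−s_i) ). In particular the right-hand side has no poles at the points t_j. -/
open Finset

/-!
Write `-a₋ = n₁ + ∑ c_p / (x - w_p)`, with residues `l a` at `z a`, `1` at `s i` and `-1` at `t j`.
For any function `f` of this shape with distinct poles,
`f² - f' = n₁² + ∑ (c_p² + c_p) / (x - w_p)² + ∑ 2 c_p f_p / (x - w_p)`,
where `f_p` is the constant term of the Laurent expansion of `f` at `w_p`. At `t j` the double pole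
cancels since `c = -1`, and the second Bethe equation says that the constant term vanishes; at `s i`
the first Bethe equation says that twice the constant term is `p_i`.
-/

section SimplePoles

variable {ι K : Type*} [Fintype ι]

theorem sq_sum_div_sub [Field K] (c : ι → K) {w : ι → K} (hw : Function.Injective w) {x : K}
    (hx : ∀ i, x ≠ w i) :
    (∑ i, c i / (x - w i)) ^ 2 = ∑ i, c i ^ 2 / (x - w i) ^ 2
      + 2 * ∑ i, c i * (∑ j, c j / (w i - w j)) / (x - w i) := by
  classical
  let simplePart (i j : ι) : K := c i * (c j / (w i - w j)) / (x - w i)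
  have product_eq (i j : ι) : c i / (x - w i) * (c j / (x - w j))
      = (if i = j then c i ^ 2 / (x - w i) ^ 2 else 0) + (simplePart i j + simplePart j i) := by
    have hxi := sub_ne_zero.2 (hx i)
    have hxj := sub_ne_zero.2 (hx j)
    rcases eq_or_ne i j with rfl | hij
    · simp [simplePart, div_mul_div_comm, sq]
    · have hwij := sub_ne_zero.2 (hw.ne hij)
      simp only [simplePart, if_neg hij, ← neg_sub (w i) (w j)]
      field_simp
      ring
  have sum_simplePart : ∑ i, ∑ j, simplePart i j
      = ∑ i, c i * (∑ j, c j / (w i - w j)) / (x - w i) := by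
    simp only [simplePart, mul_sum, sum_div]
  calc (∑ i, c i / (x - w i)) ^ 2
      = ∑ i, ∑ j, c i / (x - w i) * (c j / (x - w j)) := by rw [sq, sum_mul_sum]
    _ = ∑ i, c i ^ 2 / (x - w i) ^ 2
          + (∑ i, ∑ j, simplePart i j + ∑ i, ∑ j, simplePart j i) := by
        simp only [product_eq, sum_add_distrib, sum_ite_eq, mem_univ, if_true]
    _ = _ := by rw [sum_comm (f := fun i j => simplePart j i), ← two_mul, sum_simplePart]

/-- The rational function with value `k` at infinity and only simple poles, at the points `w i` with
residues `c i`. Since `c i / 0 = 0`, its value at `w i` is, for injective `w`, the constant term of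
its Laurent expansion there. -/
def simplePoleSum [Field K] (k : K) (c w : ι → K) (x : K) : K :=
  k + ∑ i, c i / (x - w i)

theorem simplePoleSum_sq [Field K] (k : K) (c : ι → K) {w : ι → K} (hw : Function.Injective w)
    {x : K} (hx : ∀ i, x ≠ w i) :
    simplePoleSum k c w x ^ 2 = k ^ 2 + ∑ i, c i ^ 2 / (x - w i) ^ 2
      + ∑ i, 2 * c i * simplePoleSum k c w (w i) / (x - w i) := by
  have sum_simple_poles : ∑ i, 2 * c i * simplePoleSum k c w (w i) / (x - w i)
      = 2 * k * ∑ i, c i / (x - w i)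
        + 2 * ∑ i, c i * (∑ j, c j / (w i - w j)) / (x - w i) := by
    rw [mul_sum, mul_sum, ← sum_add_distrib]
    exact sum_congr rfl fun i _ => by rw [simplePoleSum]; ring
  rw [sum_simple_poles, simplePoleSum]
  linear_combination sq_sum_div_sub c hw hx

variable [NontriviallyNormedField K]

theorem hasDerivAt_simplePoleSum (k : K) (c : ι → K) {w : ι → K} {x : K} (hx : ∀ i, x ≠ w i) :
    HasDerivAt (simplePoleSum k c w) (-∑ i, c i / (x - w i) ^ 2) x := by
  rw [← sum_neg_distrib]
  refine (HasDerivAt.fun_sum fun i _ => ?_).const_add k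
  simpa [neg_div] using
    (hasDerivAt_const x (c i)).fun_div ((hasDerivAt_id' x).sub_const (w i)) (sub_ne_zero.2 (hx i))

theorem simplePoleSum_sq_sub_deriv (k : K) (c : ι → K) {w : ι → K} (hw : Function.Injective w)
    {x : K} (hx : ∀ i, x ≠ w i) :
    simplePoleSum k c w x ^ 2 - deriv (simplePoleSum k c w) x
      = k ^ 2 + ∑ i, (c i ^ 2 + c i) / (x - w i) ^ 2
        + ∑ i, 2 * c i * simplePoleSum k c w (w i) / (x - w i) := by
  rw [simplePoleSum_sq k c hw hx, (hasDerivAt_simplePoleSum k c hx).deriv]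
  simp only [add_div, sum_add_distrib]
  ring

end SimplePoles

section Bethe

variable {ι κ τ K : Type*} [Fintype ι] [Fintype κ] [Fintype τ]

/-- Half the logarithmic derivative of
`e^{2 n₁ x} ∏ (x - z a)^{2 l a} ∏ (x - s i)² / ∏ (x - t j)²`, that is `-a₋`. As for `simplePoleSum`,
its value at any of the poles is the constant term of the Laurent expansion there. -/
def betheLogDeriv [Field K] (n₁ : K) (l z : ι → K) (s : κ → K) (t : τ → K) (x : K) : K :=
  n₁ + ∑ a, l a / (x - z a) + ∑ i, 1 / (x - s i) - ∑ j, 1 / (x - t j)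

section Field

variable [Field K] (n₁ : K) (l z : ι → K) (s : κ → K) (t : τ → K)

theorem betheLogDeriv_eq_simplePoleSum :
    betheLogDeriv n₁ l z s t
      = simplePoleSum n₁ (Sum.elim l (Sum.elim 1 (-1))) (Sum.elim z (Sum.elim s t)) := by
  ext x
  simp only [betheLogDeriv, simplePoleSum, Fintype.sum_sum_type, Sum.elim_inl, Sum.elim_inr,
    Pi.one_apply, Pi.neg_apply, neg_div, sum_neg_distrib]
  ring

theorem two_mul_betheLogDeriv_apply_z [DecidableEq ι] (a : ι) :
    2 * l a * betheLogDeriv n₁ l z s t (z a)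
      = 2 * n₁ * l a + ∑ b ∈ univ.erase a, 2 * l a * l b / (z a - z b)
        - 2 * l a * (∑ j, 1 / (z a - t j) - ∑ i, 1 / (z a - s i)) := by
  rw [sum_erase univ (by simp)]
  simp only [betheLogDeriv, mul_div_assoc, ← mul_sum]
  ring

theorem two_mul_betheLogDeriv_apply_s [DecidableEq κ] {n₀ : K} {m : ι → K} {i : κ}
    (bethe : ∑ a, m a / (s i - z a) + ∑ j, 1 / (s i - t j)
      - ∑ j ∈ univ.erase i, 1 / (s i - s j) + n₀ = 0) :
    2 * betheLogDeriv n₁ l z s t (s i)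
      = 2 * (n₀ + n₁) + ∑ a, (2 * m a + 2 * l a) / (s i - z a) := by
  rw [sum_erase univ (by simp)] at bethe
  simp only [betheLogDeriv, add_div, sum_add_distrib, mul_div_assoc, ← mul_sum]
  linear_combination -2 * bethe

variable {n₁ l z s t} in
theorem betheLogDeriv_apply_t [DecidableEq τ] {j : τ}
    (bethe : ∑ a, l a / (t j - z a) + ∑ i, 1 / (t j - s i)
      - ∑ i ∈ univ.erase j, 1 / (t j - t i) + n₁ = 0) :
    betheLogDeriv n₁ l z s t (t j) = 0 := by
  rw [sum_erase univ (by simp)] at bethe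
  rw [betheLogDeriv]
  linear_combination bethe

end Field

variable [NontriviallyNormedField K]

theorem betheLogDeriv_sq_sub_deriv (n₁ : K) (l : ι → K) {z : ι → K} {s : κ → K} {t : τ → K}
    (hz : Function.Injective z) (hs : Function.Injective s) (ht : Function.Injective t)
    (hst : ∀ i j, s i ≠ t j) (hsz : ∀ i a, s i ≠ z a) (htz : ∀ j a, t j ≠ z a)
    {x : K} (hxz : ∀ a, x ≠ z a) (hxs : ∀ i, x ≠ s i) (hxt : ∀ j, x ≠ t j) :
    betheLogDeriv n₁ l z s t x ^ 2 - deriv (betheLogDeriv n₁ l z s t) x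
      = n₁ ^ 2 + ∑ a, (l a ^ 2 + l a) / (x - z a) ^ 2 + ∑ i, 2 / (x - s i) ^ 2
        + ∑ a, 2 * l a * betheLogDeriv n₁ l z s t (z a) / (x - z a)
        + ∑ i, 2 * betheLogDeriv n₁ l z s t (s i) / (x - s i)
        - ∑ j, 2 * betheLogDeriv n₁ l z s t (t j) / (x - t j) := by
  have poles_injective : Function.Injective (Sum.elim z (Sum.elim s t)) :=
    hz.sumElim (hs.sumElim ht hst)
      fun a => Sum.rec (fun i => (hsz i a).symm) (fun j => (htz j a).symm)
  have ne_poles : ∀ p, x ≠ Sum.elim z (Sum.elim s t) p :=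
    Sum.rec hxz (Sum.rec hxs hxt)
  rw [betheLogDeriv_eq_simplePoleSum, simplePoleSum_sq_sub_deriv n₁ _ poles_injective ne_poles]
  simp only [Fintype.sum_sum_type, Sum.elim_inl, Sum.elim_inr, Pi.one_apply, Pi.neg_apply,
    one_pow, neg_one_sq, one_add_one_eq_two, add_neg_cancel, zero_div, sum_const_zero, mul_one,
    mul_neg, neg_mul, neg_div, sum_neg_distrib]
  ring

end Bethe

theorem exp_gaudin_L1_potential_general {ι κ τ K : Type*} [Fintype ι] [Fintype κ] [Fintype τ]
    [DecidableEq ι] [DecidableEq κ] [DecidableEq τ] [NontriviallyNormedField K]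
    {z m l : ι → K} {n₀ n₁ : K} {s : κ → K} {t : τ → K}
    (hz : Function.Injective z) (hs : Function.Injective s) (ht : Function.Injective t)
    (hst : ∀ i j, s i ≠ t j) (hsz : ∀ i a, s i ≠ z a) (htz : ∀ j a, t j ≠ z a)
    (bethe_s : ∀ i, ∑ a, m a / (s i - z a) + ∑ j, 1 / (s i - t j)
      - ∑ j ∈ univ.erase i, 1 / (s i - s j) + n₀ = 0)
    (bethe_t : ∀ i, ∑ a, l a / (t i - z a) + ∑ j, 1 / (t i - s j)
      - ∑ j ∈ univ.erase i, 1 / (t i - t j) + n₁ = 0)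
    {aminus : K → K}
    (haminus : ∀ x, aminus x
      = -(n₁ + ∑ a, l a / (x - z a) + ∑ i, 1 / (x - s i) - ∑ j, 1 / (x - t j)))
    {x : K} (hxz : ∀ a, x ≠ z a) (hxs : ∀ i, x ≠ s i) (hxt : ∀ j, x ≠ t j) :
    aminus x ^ 2 + deriv aminus x
      = n₁ ^ 2 + ∑ a, (l a ^ 2 + l a) / (x - z a) ^ 2 + ∑ i, 2 / (x - s i) ^ 2
        + ∑ a, (2 * n₁ * l a + (∑ b ∈ univ.erase a, 2 * l a * l b / (z a - z b))
            - 2 * l a * ((∑ j, 1 / (z a - t j)) - ∑ i, 1 / (z a - s i))) / (x - z a)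
        + ∑ i, (2 * (n₀ + n₁) + ∑ a, (2 * m a + 2 * l a) / (s i - z a)) / (x - s i) := by
  have aminus_eq : aminus = -betheLogDeriv n₁ l z s t := funext haminus
  have no_poles_t : ∑ j, 2 * betheLogDeriv n₁ l z s t (t j) / (x - t j) = 0 :=
    sum_eq_zero fun j _ => by rw [betheLogDeriv_apply_t (bethe_t j), mul_zero, zero_div]
  have potential_eq := betheLogDeriv_sq_sub_deriv n₁ l hz hs ht hst hsz htz hxz hxs hxt
  simp only [no_poles_t, sub_zero, two_mul_betheLogDeriv_apply_z,
    fun i => two_mul_betheLogDeriv_apply_s n₁ l z s t (bethe_s i)] at potential_eq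
  rw [aminus_eq, deriv.neg, Pi.neg_apply, neg_sq, ← sub_eq_add_neg, potential_eq]

/-- Proposition (i) on the operator `L₁` from a λ-oper: for a solution of the exponential
Gaudin Bethe Ansatz equations, the potential `a₋² + a₋'` has the stated explicit
partial-fraction form (with no poles at the points `t j`). -/
theorem exp_gaudin_L1_potential (n : ℕ) (hn : 1 ≤ n)
    (z : Fin n → ℂ) (hz_inj : Function.Injective z)
    (m l : Fin n → ℂ) (n₀ n₁ : ℂ) (d₀ d₁ : ℕ)
    (s : Fin d₀ → ℂ) (t : Fin d₁ → ℂ)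
    (hs_inj : Function.Injective s) (ht_inj : Function.Injective t)
    (hst : ∀ i j, s i ≠ t j) (hsz : ∀ i a, s i ≠ z a) (htz : ∀ j a, t j ≠ z a)
    (hBAE1 : ∀ i, ∑ a, m a / (s i - z a) + ∑ j, 1 / (s i - t j)
      - ∑ j ∈ univ.erase i, 1 / (s i - s j) + n₀ = 0)
    (hBAE2 : ∀ i, ∑ a, l a / (t i - z a) + ∑ j, 1 / (t i - s j)
      - ∑ j ∈ univ.erase i, 1 / (t i - t j) + n₁ = 0)
    (aminus : ℂ → ℂ)
    (haminus : ∀ x, aminus x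
      = -(n₁ + ∑ a, l a / (x - z a) + ∑ i, 1 / (x - s i) - ∑ j, 1 / (x - t j))) :
    ∀ x : ℂ, (∀ a, x ≠ z a) → (∀ i, x ≠ s i) → (∀ j, x ≠ t j) →
      (aminus x) ^ 2 + deriv aminus x
        = n₁ ^ 2 + ∑ a, ((l a) ^ 2 + l a) / (x - z a) ^ 2
          + ∑ i, 2 / (x - s i) ^ 2
          + ∑ a, (2 * n₁ * l a + (∑ b ∈ univ.erase a, 2 * l a * l b / (z a - z b))
              - 2 * l a * ((∑ j, 1 / (z a - t j)) - ∑ i, 1 / (z a - s i))) / (x - z a)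
          + ∑ i, (2 * (n₀ + n₁) + ∑ a, (2 * m a + 2 * l a) / (s i - z a)) / (x - s i) :=
  fun _ hxz hxs hxt => exp_gaudin_L1_potential_general hz_inj hs_inj ht_inj hst hsz htz
    hBAE1 hBAE2 haminus hxz hxs hxt
end

section
/- Let k, l, m ∈ ℂ with k = 2m + 2l, let s₁,…,s_{d₀} ∈ ℂ∖{0,1} be pairwise distinct, t₁,…,t_{d₁} ∈ ℂ∖{0,1} be pairwise distinct, with s_i ≠ t_j, satisfying the Gaudin Bethe Ansatz Equations (BLZ case): for each i, (1/2)/(s_i−1) + m/s_i + ∑_j 1/(s_i−t_j) − ∑_{j≠i} 1/(s_i−s_j) = 0, and for each i, l/t_i + ∑_j 1/(t_i−s_j) − ∑_{j≠i} 1/(t_i−t_j) = 0. Define b₀ = −m + ∑_{i=1}^{d₀} 2m/s_i − ∑_{j=1}^{d₁} 2m/t_j, b₁ = m + ∑_{i=1}^{d₀} 1/(s_i−1) − ∑_{j=1}^{d₁} 1/(t_j−1), and q_j = k/t_j + 1/(t_j−1) for j = 1,…,d₁. Then b₀ + b₁ + ∑_{j=1}^{d₁} q_j = 0. -/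
open Finset

/-!
Read the Bethe equations as the balance of forces at the roots `s i` and `t j`: each root feels an
external force and pairwise forces `±1 / (x - y)`. The pairwise force is odd in `x - y`, so in the
sum of all the equations action and reaction cancel and the total external force vanishes. Twice
this total is `b₀ + b₁ + ∑ j, q j`.
-/

section OddForce

variable {ι κ G A : Type*} [Fintype ι] [Fintype κ] [AddCommGroup G] [AddCommGroup A] {φ : G → A}

lemma sum_sum_odd_sub_comm (hφ : φ.Odd) (x : ι → G) (y : κ → G) :
    ∑ j, ∑ i, φ (y j - x i) = -∑ i, ∑ j, φ (x i - y j) := by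
  rw [sum_comm]
  simp only [← sum_neg_distrib, ← hφ (_ - _), neg_sub]

lemma sum_sum_erase_odd_sub_eq_zero [DecidableEq ι] (hφ : φ.Odd) (x : ι → G) :
    ∑ i, ∑ j ∈ univ.erase i, φ (x i - x j) = 0 := by
  rw [sum_sigma']
  refine sum_involution (fun p _ ↦ ⟨p.2, p.1⟩) ?cancel ?no_fixed_point ?mem ?involutive
  case cancel =>
    intro p _
    rw [← neg_sub (x p.1), hφ, add_neg_cancel]
  case no_fixed_point =>
    rintro ⟨i, j⟩ hp - hfix
    have hji : j ≠ i := by simpa using hp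
    exact hji (congrArg Sigma.fst hfix)
  case mem =>
    rintro ⟨i, j⟩ hp
    simpa [eq_comm] using hp
  case involutive => exact fun _ _ ↦ rfl

lemma sum_external_add_sum_external_eq_zero [DecidableEq ι] [DecidableEq κ] (hφ : φ.Odd)
    {x : ι → G} {y : κ → G} {u : ι → A} {v : κ → A}
    (hu : ∀ i, u i + ∑ j, φ (x i - y j) - ∑ j ∈ univ.erase i, φ (x i - x j) = 0)
    (hv : ∀ j, v j + ∑ i, φ (y j - x i) - ∑ i ∈ univ.erase j, φ (y j - y i) = 0) :
    ∑ i, u i + ∑ j, v j = 0 := by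
  have sum_u : ∑ i, u i + ∑ i, ∑ j, φ (x i - y j) = 0 := by
    simpa only [sum_sub_distrib, sum_add_distrib, sum_sum_erase_odd_sub_eq_zero hφ, sub_zero]
      using sum_eq_zero fun i (_ : i ∈ univ) ↦ hu i
  have sum_v : ∑ j, v j - ∑ i, ∑ j, φ (x i - y j) = 0 := by
    simpa only [sum_sub_distrib, sum_add_distrib, sum_sum_erase_odd_sub_eq_zero hφ, sub_zero,
      sum_sum_odd_sub_comm hφ x y, ← sub_eq_add_neg] using sum_eq_zero fun j (_ : j ∈ univ) ↦ hv j
  rw [eq_neg_of_add_eq_zero_left sum_u, sub_eq_zero.mp sum_v, neg_add_cancel]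

end OddForce

section Gaudin

variable {ι κ K : Type*} [Fintype ι] [Fintype κ] [DecidableEq ι] [DecidableEq κ] [Field K]

/-- The families `s` and `t` are Bethe roots of the Gaudin model in the BLZ case: they solve the
Bethe Ansatz Equations with parameters `l` and `m`. The first seven fields say that no denominator
in the equations or in the coefficients of `L₀` vanishes. -/
structure IsGaudinBetheSolution (l m : K) (s : ι → K) (t : κ → K) : Prop where
  s_injective : Function.Injective s
  t_injective : Function.Injective t
  s_ne_zero : ∀ i, s i ≠ 0
  s_ne_one : ∀ i, s i ≠ 1
  t_ne_zero : ∀ j, t j ≠ 0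
  t_ne_one : ∀ j, t j ≠ 1
  s_ne_t : ∀ i j, s i ≠ t j
  s_equation : ∀ i, (1 / 2) / (s i - 1) + m / s i
    + ∑ j, 1 / (s i - t j) - ∑ j ∈ univ.erase i, 1 / (s i - s j) = 0
  t_equation : ∀ j, l / t j + ∑ i, 1 / (t j - s i) - ∑ i ∈ univ.erase j, 1 / (t j - t i) = 0

lemma IsGaudinBetheSolution.sum_external_eq_zero {l m : K} {s : ι → K} {t : κ → K}
    (h : IsGaudinBetheSolution l m s t) :
    ∑ i, ((1 / 2) / (s i - 1) + m / s i) + ∑ j, l / t j = 0 :=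
  have one_div_odd : Function.Odd fun x : K ↦ 1 / x := fun _ ↦ div_neg 1
  sum_external_add_sum_external_eq_zero one_div_odd h.s_equation h.t_equation

theorem gaudin_BAE_L0_no_residue_at_infinity_general [NeZero (2 : K)] {l m : K}
    {s : ι → K} {t : κ → K} (h : IsGaudinBetheSolution l m s t) :
    (-m + (∑ i, 2 * m / s i) - ∑ j, 2 * m / t j)
      + (m + (∑ i, 1 / (s i - 1)) - ∑ j, 1 / (t j - 1))
      + ∑ j, ((2 * m + 2 * l) / t j + 1 / (t j - 1)) = 0 := by
  have twice_s_force : ∑ i, 2 * m / s i + ∑ i, 1 / (s i - 1)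
      = 2 * ∑ i, ((1 / 2) / (s i - 1) + m / s i) := by
    rw [← sum_add_distrib, mul_sum]
    refine sum_congr rfl fun i _ ↦ ?_
    linear_combination -(s i - 1)⁻¹ * mul_one_div_cancel (two_ne_zero (α := K))
  have q_sum : ∑ j, ((2 * m + 2 * l) / t j + 1 / (t j - 1))
      = ∑ j, 2 * m / t j + 2 * ∑ j, l / t j + ∑ j, 1 / (t j - 1) := by
    simp only [mul_sum, ← sum_add_distrib, add_div, mul_div_assoc]
  linear_combination twice_s_force + q_sum + 2 * h.sum_external_eq_zero

end Gaudin

/-- For a solution of the Gaudin Bethe Ansatz equations in the BLZ case (with `k = 2m + 2l`),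
the residue coefficients `b₀`, `b₁`, `q j` of the operator `L₀` satisfy
`b₀ + b₁ + ∑ j, q j = 0` (no `1/x` term at infinity). -/
theorem gaudin_BAE_L0_no_residue_at_infinity (k l m : ℂ) (hk : k = 2 * m + 2 * l)
    (d₀ d₁ : ℕ) (s : Fin d₀ → ℂ) (t : Fin d₁ → ℂ)
    (hs_inj : Function.Injective s) (ht_inj : Function.Injective t)
    (hs0 : ∀ i, s i ≠ 0) (hs1 : ∀ i, s i ≠ 1)
    (ht0 : ∀ j, t j ≠ 0) (ht1 : ∀ j, t j ≠ 1)
    (hst : ∀ i j, s i ≠ t j)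
    (hBAE1 : ∀ i, (1/2) / (s i - 1) + m / s i
      + ∑ j, 1 / (s i - t j) - ∑ j ∈ univ.erase i, 1 / (s i - s j) = 0)
    (hBAE2 : ∀ i, l / t i + ∑ j, 1 / (t i - s j)
      - ∑ j ∈ univ.erase i, 1 / (t i - t j) = 0)
    (b₀ b₁ : ℂ) (q : Fin d₁ → ℂ)
    (hb₀ : b₀ = -m + (∑ i, 2 * m / s i) - ∑ j, 2 * m / t j)
    (hb₁ : b₁ = m + (∑ i, 1 / (s i - 1)) - ∑ j, 1 / (t j - 1))
    (hq : ∀ j, q j = k / t j + 1 / (t j - 1)) :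
    b₀ + b₁ + ∑ j, q j = 0 := by
  subst hk hb₀ hb₁
  simpa only [hq] using gaudin_BAE_L0_no_residue_at_infinity_general
    ⟨hs_inj, ht_inj, hs0, hs1, ht0, ht1, hst, hBAE1, hBAE2⟩
end

section
/- Let k, l ∈ ℂ with (k+3)(k−2l+1)(k+2l+3) ≠ 0, k+2 ≠ 0, k−2l ≠ 0 and k+2l+2 ≠ 0. For s ∈ ℂ∖{0,1} set p = k/s + 1/(s−1) and f(s) = −p³/4 − p²/s + p(l(l+1)−1)/s² + 2l(l+1)/s³. Then f(s) = 0 if and only if s ∈ { (k−2l)/(k−2l+1), (k+2)/(k+3), (k+2l+2)/(k+2l+3) }. -/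
/-!
The condition `f = 0` is a cubic in `p` whose roots are `2l/s`, `-2/s` and `-2(l+1)/s`: indeed
`f = -(p - 2l/s)(p + 2/s)(p + 2(l+1)/s)/4`. With `p = k/s + 1/(s-1)`, each equation `p = c/s` is
linear in `s` after clearing denominators, with the single solution `s = (k-c)/(k-c+1)`.
-/

section

variable {F : Type*} [Field F]

/-- The function `f` of equation (f gen) with `n₁ = 0`, whose vanishing says that the monodromy
around `x = s` is trivial. The logarithmic derivative `p = P'(s)/P(s)` is kept as an independent
variable. -/
def monodromyObstruction (l p s : F) : F :=
  -p ^ 3 / 4 - p ^ 2 / s + p * (l * (l + 1) - 1) / s ^ 2 + 2 * l * (l + 1) / s ^ 3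

theorem monodromyObstruction_eq_prod (h4 : (4 : F) ≠ 0) (l p s : F) :
    monodromyObstruction l p s =
      -((p - 2 * l / s) * (p - -2 / s) * (p - -2 * (l + 1) / s)) / 4 := by
  unfold monodromyObstruction
  rw [eq_div_iff h4]
  simp only [div_eq_mul_inv, ← inv_pow]
  linear_combination -p ^ 3 * inv_mul_cancel₀ h4

theorem monodromyObstruction_eq_zero_iff (h4 : (4 : F) ≠ 0) {l p s : F} :
    monodromyObstruction l p s = 0 ↔
      p = 2 * l / s ∨ p = -2 / s ∨ p = -2 * (l + 1) / s := by
  rw [monodromyObstruction_eq_prod h4, div_eq_zero_iff, or_iff_left h4, neg_eq_zero, mul_eq_zero,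
    mul_eq_zero, sub_eq_zero, sub_eq_zero, sub_eq_zero, or_assoc]

theorem div_add_one_div_sub_one_eq_div_iff {k c s : F} (hc : k - c + 1 ≠ 0) (hs0 : s ≠ 0)
    (hs1 : s ≠ 1) :
    k / s + 1 / (s - 1) = c / s ↔ s = (k - c) / (k - c + 1) := by
  have hs1' : s - 1 ≠ 0 := sub_ne_zero.mpr hs1
  rw [div_add_div _ _ hs0 hs1', div_eq_div_iff (mul_ne_zero hs0 hs1') hs0, eq_div_iff hc,
    ← mul_right_inj' hs0 (b := s * (k - c + 1))]
  constructor <;> intro h <;> linear_combination h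

theorem degree_one_trivial_monodromy_general {k l s : F} (h2 : (2 : F) ≠ 0)
    (h : (k + 3) * (k - 2 * l + 1) * (k + 2 * l + 3) ≠ 0) (hs0 : s ≠ 0) (hs1 : s ≠ 1) :
    monodromyObstruction l (k / s + 1 / (s - 1)) s = 0 ↔
      s = (k - 2 * l) / (k - 2 * l + 1) ∨ s = (k + 2) / (k + 3) ∨
        s = (k + 2 * l + 2) / (k + 2 * l + 3) := by
  obtain ⟨⟨hk, hkl⟩, hkl'⟩ := by simpa only [mul_ne_zero_iff] using h
  have h4 : (4 : F) ≠ 0 := by simpa only [← two_add_two_eq_four, ← two_mul] using mul_ne_zero h2 h2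
  have sub_neg_two : k - -2 = k + 2 := by ring
  have sub_neg_two_add_one : k - -2 + 1 = k + 3 := by ring
  have sub_neg_two_mul : k - -2 * (l + 1) = k + 2 * l + 2 := by ring
  have sub_neg_two_mul_add_one : k - -2 * (l + 1) + 1 = k + 2 * l + 3 := by ring
  rw [monodromyObstruction_eq_zero_iff h4,
    div_add_one_div_sub_one_eq_div_iff hkl hs0 hs1,
    div_add_one_div_sub_one_eq_div_iff (sub_neg_two_add_one ▸ hk) hs0 hs1,
    div_add_one_div_sub_one_eq_div_iff (sub_neg_two_mul_add_one ▸ hkl') hs0 hs1,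
    sub_neg_two_add_one, sub_neg_two, sub_neg_two_mul_add_one, sub_neg_two_mul]

end

/-- The trivial-monodromy condition for the degree-one operator `L^G`: with
`p = k/s + 1/(s-1)` and
`f(s) = -p³/4 - p²/s + p(l(l+1)-1)/s² + 2l(l+1)/s³`, one has `f(s) = 0` if and only if
`s` is one of `(k-2l)/(k-2l+1)`, `(k+2)/(k+3)`, `(k+2l+2)/(k+2l+3)`. -/
theorem degree_one_trivial_monodromy (k l : ℂ)
    (h1 : (k + 3) * (k - 2 * l + 1) * (k + 2 * l + 3) ≠ 0)
    (h2 : k + 2 ≠ 0) (h3 : k - 2 * l ≠ 0) (h4 : k + 2 * l + 2 ≠ 0) :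
    ∀ s : ℂ, s ≠ 0 → s ≠ 1 →
      ((-(k / s + 1 / (s - 1)) ^ 3 / 4 - (k / s + 1 / (s - 1)) ^ 2 / s
          + (k / s + 1 / (s - 1)) * (l * (l + 1) - 1) / s ^ 2
          + 2 * l * (l + 1) / s ^ 3 = 0)
        ↔ (s = (k - 2 * l) / (k - 2 * l + 1) ∨ s = (k + 2) / (k + 3)
            ∨ s = (k + 2 * l + 2) / (k + 2 * l + 3))) :=
  fun _ hs0 hs1 => degree_one_trivial_monodromy_general two_ne_zero h1 hs0 hs1
end

section
/- Let k, l ∈ ℂ with k+2 ≠ 0, k+3 ≠ 0, l ≠ 0 and l+1 ≠ 0. Consider complex numbers s ∈ ℂ∖{0,1} and t ∈ ℂ∖{0} with s ≠ t. Then the pair (s,t) satisfies the system (k−2l)/s + 1/(s−1) + 2/(s−t) = 0 and 2l/t + 2/(t−s) = 0 if and only if s = (k+2)/(k+3) and t = (l/(l+1))·((k+2)/(k+3)). -/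
/-!
Each Bethe equation is an instance of `a / x + b / (x - z) = 0`, whose only root is
`x = a / (a + b) * z`. The equation for `t` has this form with `z = s`, so `t` is proportional to
`s`. The interaction term `c / (s - t)` is then a multiple of `1 / s`, and absorbing it into the
pole at `0` brings the equation for `s` into the same form with `z = 1`.
-/

section BetheEquations

variable {K : Type*} [Field K] {a b c d s t x z : K}

theorem div_add_div_sub_eq_zero_iff (hab : a + b ≠ 0) (hx : x ≠ 0) (hxz : x ≠ z) :
    a / x + b / (x - z) = 0 ↔ x = a / (a + b) * z := by
  have hxz' : x - z ≠ 0 := sub_ne_zero.mpr hxz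
  rw [div_add_div _ _ hx hxz', div_eq_zero_iff, or_iff_left (mul_ne_zero hx hxz'),
    div_mul_eq_mul_div, eq_div_iff hab]
  constructor <;> intro h <;> linear_combination h

theorem div_sub_div_add_mul_self (hc : c ≠ 0) (hdc : d + c ≠ 0) :
    c / (s - d / (d + c) * s) = (d + c) / s := by
  have hsub : s - d / (d + c) * s = c * (s / (d + c)) := by
    field_simp
    ring
  rw [hsub, div_mul_cancel_left₀ hc, inv_div]

theorem bethe_equations_two_roots_iff (hc : c ≠ 0) (hdc : d + c ≠ 0)
    (habcd : a + (d + c) + b ≠ 0) (hs : s ≠ 0) (hsz : s ≠ z) (ht : t ≠ 0) (hst : s ≠ t) :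
    (a / s + b / (s - z) + c / (s - t) = 0 ∧ d / t + c / (t - s) = 0) ↔
      s = (a + (d + c)) / (a + (d + c) + b) * z ∧ t = d / (d + c) * s := by
  rw [div_add_div_sub_eq_zero_iff hdc ht hst.symm]
  refine and_congr_left fun t_eq => ?_
  have absorb_interaction :
      a / s + b / (s - z) + c / (s - t) = (a + (d + c)) / s + b / (s - z) := by
    rw [t_eq, div_sub_div_add_mul_self hc hdc]
    ring
  rw [absorb_interaction, div_add_div_sub_eq_zero_iff habcd hs hsz]

theorem gaudin_BAE_depth_one_one_general {k l : K} (two_ne : (2 : K) ≠ 0)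
    (h3 : k + 3 ≠ 0) (hl1 : l + 1 ≠ 0) (hs : s ≠ 0) (hs1 : s ≠ 1) (ht : t ≠ 0) (hst : s ≠ t) :
    ((k - 2 * l) / s + 1 / (s - 1) + 2 / (s - t) = 0 ∧ 2 * l / t + 2 / (t - s) = 0) ↔
      s = (k + 2) / (k + 3) ∧ t = l / (l + 1) * ((k + 2) / (k + 3)) := by
  have weight_t : 2 * l + 2 = 2 * (l + 1) := by ring
  have weight_s : k - 2 * l + 2 * (l + 1) = k + 2 := by ring
  have weight_total : k + 2 + 1 = k + 3 := by ring
  have solution := bethe_equations_two_roots_iff (a := k - 2 * l) (b := 1) (d := 2 * l) two_ne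
    (by rw [weight_t]; exact mul_ne_zero two_ne hl1)
    (by rwa [weight_t, weight_s, weight_total]) hs hs1 ht hst
  rw [weight_t, weight_s, weight_total, mul_one, mul_div_mul_left _ _ two_ne] at solution
  exact solution.trans (and_congr_right fun s_eq => by rw [s_eq])

end BetheEquations

/-- The Gaudin Bethe Ansatz equations (BLZ case) for depth pair `(1,1)` have the unique
solution `s = (k+2)/(k+3)`, `t = (l/(l+1))·((k+2)/(k+3))`. -/
theorem gaudin_BAE_depth_one_one (k l : ℂ)
    (h2 : k + 2 ≠ 0) (h3 : k + 3 ≠ 0) (hl : l ≠ 0) (hl1 : l + 1 ≠ 0) :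
    ∀ s t : ℂ, s ≠ 0 → s ≠ 1 → t ≠ 0 → s ≠ t →
      (((k - 2 * l) / s + 1 / (s - 1) + 2 / (s - t) = 0
          ∧ 2 * l / t + 2 / (t - s) = 0)
        ↔ (s = (k + 2) / (k + 3) ∧ t = (l / (l + 1)) * ((k + 2) / (k + 3)))) :=
  fun _ _ hs hs1 ht hst => gaudin_BAE_depth_one_one_general two_ne_zero h3 hl1 hs hs1 ht hst
end

section
/- Let k, l ∈ ℂ with l ≠ 0, 2l−1 ≠ 0, 2l+1 ≠ 0, k+2l+2 ≠ 0 and k+2l+3 ≠ 0. Consider s ∈ ℂ∖{0,1} and t₁, t₂ ∈ ℂ∖{0} with s, t₁, t₂ pairwise distinct. Then (s, t₁, t₂) satisfies the system (k−2l)/s + 1/(s−1) + 2/(s−t₁) + 2/(s−t₂) = 0, l/t₁ + 1/(t₁−s) − 1/(t₁−t₂) = 0, l/t₂ + 1/(t₂−s) − 1/(t₂−t₁) = 0, if and only if s = (k+2l+2)/(k+2l+3), t₁ + t₂ = ((2l−1)/l)·s and t₁·t₂ = ((2l−1)/(2l+1))·s². -/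
/-!
After clearing denominators, the equations for `t₁` and `t₂` become
`(t₁ + s) * P = Q` and `(t₂ + s) * P = Q`, where `P = l (t₁ + t₂) - (2l - 1) s` and
`Q = (2l + 1) t₁ t₂ - (2l - 1) s²` are symmetric in `t₁`, `t₂`. As `t₁ ≠ t₂`, these two equations
are equivalent to `P = Q = 0`. For `y₂ = (x - t₁)(x - t₂)` this forces
`y₂'(s) / y₂(s) = (2l + 1) / s`, so the remaining equation collapses to
`(k + 2l + 2) / s + 1 / (s - 1) = 0`, which determines `s`.
-/

section CommRing

variable {R : Type*} [CommRing R]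

theorem bethe_numerator_eq (l s t u : R) :
    l * (t - s) * (t - u) + t * (s - u) =
      (t + s) * (l * (t + u) - (2 * l - 1) * s) -
        ((2 * l + 1) * (t * u) - (2 * l - 1) * s ^ 2) := by
  ring

theorem mul_eq_and_mul_eq_iff [NoZeroDivisors R] {t u p q : R} (htu : t ≠ u) :
    t * p = q ∧ u * p = q ↔ p = 0 ∧ q = 0 := by
  constructor
  · rintro ⟨ht, hu⟩
    have hp : p = 0 := by
      have hmul : (t - u) * p = 0 := by linear_combination ht - hu
      exact (mul_eq_zero.1 hmul).resolve_left (sub_ne_zero.2 htu)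
    exact ⟨hp, by rw [← ht, hp, mul_zero]⟩
  · rintro ⟨rfl, rfl⟩
    exact ⟨mul_zero _, mul_zero _⟩

end CommRing

section Field

variable {K : Type*} [Field K]

theorem eq_div_mul_iff_mul_sub_mul_eq_zero {p q x y : K} (hq : q ≠ 0) :
    x = p / q * y ↔ q * x - p * y = 0 := by
  rw [div_mul_eq_mul_div, eq_div_iff hq, sub_eq_zero, mul_comm]

theorem div_add_one_div_sub_one_eq_zero_iff {c s : K} (hc : c + 1 ≠ 0) (hs : s ≠ 0)
    (hs1 : s ≠ 1) : c / s + 1 / (s - 1) = 0 ↔ s = c / (c + 1) := by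
  rw [div_add_div _ _ hs (sub_ne_zero.2 hs1), div_eq_zero_iff,
    or_iff_left (mul_ne_zero hs (sub_ne_zero.2 hs1)), eq_div_iff hc]
  constructor <;> intro h <;> linear_combination h

theorem bethe_eq_iff {l s t u : K} (ht : t ≠ 0) (hts : t ≠ s) (htu : t ≠ u) :
    l / t + 1 / (t - s) - 1 / (t - u) = 0 ↔
      (t + s) * (l * (t + u) - (2 * l - 1) * s) =
        (2 * l + 1) * (t * u) - (2 * l - 1) * s ^ 2 := by
  have hts' : t - s ≠ 0 := sub_ne_zero.2 hts
  have htu' : t - u ≠ 0 := sub_ne_zero.2 htu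
  have common_denominator : l / t + 1 / (t - s) - 1 / (t - u) =
      (l * (t - s) * (t - u) + t * (s - u)) / (t * (t - s) * (t - u)) := by
    field_simp
    ring
  have denominator_ne_zero : t * (t - s) * (t - u) ≠ 0 :=
    mul_ne_zero (mul_ne_zero ht hts') htu'
  rw [common_denominator, div_eq_zero_iff, or_iff_left denominator_ne_zero, bethe_numerator_eq,
    sub_eq_zero]

theorem bethe_eq_pair_iff {l s t₁ t₂ : K} (hl : l ≠ 0) (hl2 : 2 * l + 1 ≠ 0)
    (ht₁ : t₁ ≠ 0) (ht₂ : t₂ ≠ 0) (hst₁ : s ≠ t₁) (hst₂ : s ≠ t₂) (ht : t₁ ≠ t₂) :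
    (l / t₁ + 1 / (t₁ - s) - 1 / (t₁ - t₂) = 0 ∧
        l / t₂ + 1 / (t₂ - s) - 1 / (t₂ - t₁) = 0) ↔
      t₁ + t₂ = (2 * l - 1) / l * s ∧ t₁ * t₂ = (2 * l - 1) / (2 * l + 1) * s ^ 2 := by
  rw [bethe_eq_iff ht₁ hst₁.symm ht, bethe_eq_iff ht₂ hst₂.symm ht.symm, add_comm t₂ t₁,
    mul_comm t₂ t₁, mul_eq_and_mul_eq_iff ((add_left_injective s).ne ht),
    eq_div_mul_iff_mul_sub_mul_eq_zero hl, eq_div_mul_iff_mul_sub_mul_eq_zero hl2]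

theorem one_div_sub_add_one_div_sub_eq {l s t₁ t₂ : K} (hl : l ≠ 0) (hl2 : 2 * l + 1 ≠ 0)
    (hs : s ≠ 0) (hst₁ : s ≠ t₁) (hst₂ : s ≠ t₂) (hsum : t₁ + t₂ = (2 * l - 1) / l * s)
    (hprod : t₁ * t₂ = (2 * l - 1) / (2 * l + 1) * s ^ 2) :
    1 / (s - t₁) + 1 / (s - t₂) = (2 * l + 1) / s := by
  rw [eq_div_mul_iff_mul_sub_mul_eq_zero hl] at hsum
  rw [eq_div_mul_iff_mul_sub_mul_eq_zero hl2] at hprod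
  have hst₁' : s - t₁ ≠ 0 := sub_ne_zero.2 hst₁
  have hst₂' : s - t₂ ≠ 0 := sub_ne_zero.2 hst₂
  rw [div_add_div _ _ hst₁' hst₂', div_eq_div_iff (mul_ne_zero hst₁' hst₂') hs]
  linear_combination (2 * s) * hsum - hprod

theorem gaudin_BAE_depth_one_two_general {k l s t₁ t₂ : K} (hl : l ≠ 0) (hl2 : 2 * l + 1 ≠ 0)
    (hk : k + 2 * l + 3 ≠ 0) (hs : s ≠ 0) (hs1 : s ≠ 1) (ht₁ : t₁ ≠ 0) (ht₂ : t₂ ≠ 0)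
    (hst₁ : s ≠ t₁) (hst₂ : s ≠ t₂) (ht : t₁ ≠ t₂) :
    ((k - 2 * l) / s + 1 / (s - 1) + 2 / (s - t₁) + 2 / (s - t₂) = 0
        ∧ l / t₁ + 1 / (t₁ - s) - 1 / (t₁ - t₂) = 0
        ∧ l / t₂ + 1 / (t₂ - s) - 1 / (t₂ - t₁) = 0)
      ↔ (s = (k + 2 * l + 2) / (k + 2 * l + 3)
          ∧ t₁ + t₂ = ((2 * l - 1) / l) * s
          ∧ t₁ * t₂ = ((2 * l - 1) / (2 * l + 1)) * s ^ 2) := by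
  rw [bethe_eq_pair_iff hl hl2 ht₁ ht₂ hst₁ hst₂ ht]
  refine and_congr_left fun ⟨hsum, hprod⟩ ↦ ?_
  have collapse : (k - 2 * l) / s + 1 / (s - 1) + 2 / (s - t₁) + 2 / (s - t₂) =
      (k + 2 * l + 2) / s + 1 / (s - 1) := by
    linear_combination 2 * one_div_sub_add_one_div_sub_eq hl hl2 hs hst₁ hst₂ hsum hprod
  have hk_eq : k + 2 * l + 3 = k + 2 * l + 2 + 1 := by ring
  rw [hk_eq] at hk ⊢
  rw [collapse, div_add_one_div_sub_one_eq_zero_iff hk hs hs1]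

end Field

/-- The Gaudin Bethe Ansatz equations (BLZ case) for depth pair `(1,2)` have the unique
solution (up to exchanging `t₁` and `t₂`) with `s = (k+2l+2)/(k+2l+3)`,
`t₁ + t₂ = ((2l-1)/l)·s` and `t₁·t₂ = ((2l-1)/(2l+1))·s²`. -/
theorem gaudin_BAE_depth_one_two (k l : ℂ)
    (hl : l ≠ 0) (hl1 : 2 * l - 1 ≠ 0) (hl2 : 2 * l + 1 ≠ 0)
    (hk1 : k + 2 * l + 2 ≠ 0) (hk2 : k + 2 * l + 3 ≠ 0) :
    ∀ s t₁ t₂ : ℂ, s ≠ 0 → s ≠ 1 → t₁ ≠ 0 → t₂ ≠ 0 →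
      s ≠ t₁ → s ≠ t₂ → t₁ ≠ t₂ →
      (((k - 2 * l) / s + 1 / (s - 1) + 2 / (s - t₁) + 2 / (s - t₂) = 0
          ∧ l / t₁ + 1 / (t₁ - s) - 1 / (t₁ - t₂) = 0
          ∧ l / t₂ + 1 / (t₂ - s) - 1 / (t₂ - t₁) = 0)
        ↔ (s = (k + 2 * l + 2) / (k + 2 * l + 3)
            ∧ t₁ + t₂ = ((2 * l - 1) / l) * s
            ∧ t₁ * t₂ = ((2 * l - 1) / (2 * l + 1)) * s ^ 2)) :=
  fun _ _ _ ↦ gaudin_BAE_depth_one_two_general hl hl2 hk2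
end

section
/- Let k > −2, λ > 0 and L > 0 be real numbers, and define U : (0,∞) → ℝ by U(x) = λ²·x^k·(x−1) + L²/x² (real powers). Set x_* = (k+2)/(k+3) and u_* = (k+3)^{(k+3)/2} / (k+2)^{(k+2)/2}. Then: (1) if λ < u_*·L then U(x) > 0 for all x > 0; (2) if λ = u_*·L then U(x_*) = 0 and U(x) > 0 for all x > 0 with x ≠ x_*; (3) if λ > u_*·L then there exist unique real numbers x₋ < x₊ with 0 < x₋ < x_* < x₊ < 1 such that U(x₋) = U(x₊) = 0, U(x) < 0 for x₋ < x < x₊, and U(x) > 0 for 0 < x < x₋ and for x > x₊. -/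
/-!
For `x > 0`, `U(x) = (λ/x)² ((L/λ)² - g(x))` with `g(x) = x^(k+2) (1 - x)`, so the sign of `U`
records the position of `g` relative to the level `(L/λ)²`. The function `g` vanishes at `0` and
`1`, increases up to `x_*` and decreases afterwards, and its maximum is `g(x_*) = u_*⁻²`. Hence the
level is never attained, attained only at `x_*`, or attained once on each side of `x_*`, according
to whether `u_*⁻¹` is less than, equal to or greater than `L/λ`.
-/

open Set

section Unimodal

variable {α β : Type*} {f : α → β} {a b m : α}

theorem apply_lt_of_strictMonoOn_of_strictAntiOn [LinearOrder α] [Preorder β]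
    (hmono : StrictMonoOn f (Icc a m)) (hanti : StrictAntiOn f (Ici m)) {x : α} (hax : a ≤ x)
    (hxm : x ≠ m) : f x < f m := by
  rcases hxm.lt_or_gt with hlt | hgt
  · exact hmono ⟨hax, hlt.le⟩ (right_mem_Icc.2 (hax.trans hlt.le)) hlt
  · exact hanti self_mem_Ici hgt.le hgt

theorem exists_level_crossings_of_strictMonoOn_of_strictAntiOn
    [ConditionallyCompleteLinearOrder α] [TopologicalSpace α] [OrderTopology α] [DenselyOrdered α]
    [LinearOrder β] [TopologicalSpace β] [OrderClosedTopology β]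
    (hmono : StrictMonoOn f (Icc a m)) (hanti : StrictAntiOn f (Ici m))
    (hf : ContinuousOn f (Icc a b)) (ham : a ≤ m) (hmb : m ≤ b) {c : β}
    (hac : f a < c) (hbc : f b < c) (hcm : c < f m) :
    ∃ p ∈ Ioo a m, ∃ q ∈ Ioo m b, f p = c ∧ f q = c ∧ (∀ x ∈ Ioo p q, c < f x) ∧
      (∀ x ∈ Ico a p, f x < c) ∧ ∀ x ∈ Ioi q, f x < c := by
  obtain ⟨p, hp, rfl⟩ :=
    intermediate_value_Ioo ham (hf.mono (Icc_subset_Icc_right hmb)) ⟨hac, hcm⟩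
  obtain ⟨q, hq, hqp⟩ :=
    intermediate_value_Ioo' hmb (hf.mono (Icc_subset_Icc_left ham)) ⟨hbc, hcm⟩
  refine ⟨p, hp, q, hq, rfl, hqp, fun x hx ↦ ?_, fun x hx ↦ ?_, fun x hx ↦ ?_⟩
  · rcases le_total x m with hxm | hmx
    · exact hmono (Ioo_subset_Icc_self hp) ⟨(hp.1.trans hx.1).le, hxm⟩ hx.1
    · exact hqp ▸ hanti hmx hq.1.le hx.2
  · exact hmono ⟨hx.1, (hx.2.trans hp.2).le⟩ (Ioo_subset_Icc_self hp) hx.2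
  · exact hqp ▸ hanti hq.1.le (hq.1.trans hx).le hx

end Unimodal

/-- The function `g(x) = x^a (1 - x)`; for `a = k + 2` the zeroes of the effective potential are
the points where it takes the value `(L/λ)²`. -/
noncomputable def potentialProfile (a x : ℝ) : ℝ :=
  x ^ a * (1 - x)

/-- The point `a / (a + 1)` at which `potentialProfile a` is maximal on `[0, ∞)`; for `a = k + 2`
it is `x_*`. -/
noncomputable def profileArgmax (a : ℝ) : ℝ :=
  a / (a + 1)

/-- The critical value of `λ / L`, namely the inverse square root of the maximum of
`potentialProfile a`; for `a = k + 2` it is `u_*`. -/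
noncomputable def criticalCoupling (a : ℝ) : ℝ :=
  (a + 1) ^ ((a + 1) / 2) / a ^ (a / 2)

section Profile

variable {a x : ℝ}

theorem potentialProfile_zero (ha : a ≠ 0) : potentialProfile a 0 = 0 := by
  simp [potentialProfile, Real.zero_rpow ha]

theorem potentialProfile_one : potentialProfile a 1 = 0 := by
  simp [potentialProfile]

theorem continuous_potentialProfile (ha : 0 ≤ a) : Continuous (potentialProfile a) :=
  (Real.continuous_rpow_const ha).mul (continuous_const.sub continuous_id)

theorem hasDerivAt_potentialProfile (hx : 0 < x) :
    HasDerivAt (potentialProfile a) (x ^ (a - 1) * (a - (a + 1) * x)) x := by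
  have hprod : HasDerivAt (potentialProfile a) (a * x ^ (a - 1) * (1 - x) + x ^ a * -1) x :=
    (Real.hasDerivAt_rpow_const (.inl hx.ne')).mul ((hasDerivAt_id x).const_sub 1)
  have hpow : x ^ a = x ^ (a - 1) * x := by
    rw [← Real.rpow_add_one hx.ne', sub_add_cancel]
  convert hprod using 1
  rw [hpow]
  ring

theorem profileArgmax_pos (ha : 0 < a) : 0 < profileArgmax a := by
  unfold profileArgmax
  positivity

theorem profileArgmax_lt_one (ha : 0 ≤ a) : profileArgmax a < 1 :=
  (div_lt_one (by positivity)).2 (lt_add_one a)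

theorem strictMonoOn_potentialProfile (ha : 0 ≤ a) :
    StrictMonoOn (potentialProfile a) (Icc 0 (profileArgmax a)) := by
  refine strictMonoOn_of_deriv_pos (convex_Icc _ _)
    (continuous_potentialProfile ha).continuousOn fun x hx ↦ ?_
  rw [interior_Icc] at hx
  have hxa : x * (a + 1) < a := (lt_div_iff₀ (by positivity)).1 hx.2
  rw [(hasDerivAt_potentialProfile hx.1).deriv]
  exact mul_pos (Real.rpow_pos_of_pos hx.1 _) (by linarith)

theorem strictAntiOn_potentialProfile (ha : 0 ≤ a) :
    StrictAntiOn (potentialProfile a) (Ici (profileArgmax a)) := by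
  refine strictAntiOn_of_deriv_neg (convex_Ici _)
    (continuous_potentialProfile ha).continuousOn fun x hx ↦ ?_
  rw [interior_Ici] at hx
  have hax : a < x * (a + 1) := (div_lt_iff₀ (by positivity)).1 hx
  have hx₀ : 0 < x := (show 0 ≤ a / (a + 1) by positivity).trans_lt hx
  rw [(hasDerivAt_potentialProfile hx₀).deriv]
  exact mul_neg_of_pos_of_neg (Real.rpow_pos_of_pos hx₀ _) (by linarith)

theorem potentialProfile_lt_apply_argmax (ha : 0 ≤ a) (hx : 0 ≤ x) (hne : x ≠ profileArgmax a) :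
    potentialProfile a x < potentialProfile a (profileArgmax a) :=
  apply_lt_of_strictMonoOn_of_strictAntiOn (strictMonoOn_potentialProfile ha)
    (strictAntiOn_potentialProfile ha) hx hne

theorem potentialProfile_le_apply_argmax (ha : 0 ≤ a) (hx : 0 ≤ x) :
    potentialProfile a x ≤ potentialProfile a (profileArgmax a) := by
  rcases eq_or_ne x (profileArgmax a) with rfl | hne
  · exact le_rfl
  · exact (potentialProfile_lt_apply_argmax ha hx hne).le

theorem exists_potentialProfile_level_crossings (ha : 0 < a) {c : ℝ} (hc : 0 < c)
    (hcm : c < potentialProfile a (profileArgmax a)) :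
    ∃ p ∈ Ioo 0 (profileArgmax a), ∃ q ∈ Ioo (profileArgmax a) 1,
      potentialProfile a p = c ∧ potentialProfile a q = c ∧
      (∀ x ∈ Ioo p q, c < potentialProfile a x) ∧
      (∀ x ∈ Ico 0 p, potentialProfile a x < c) ∧ ∀ x ∈ Ioi q, potentialProfile a x < c :=
  exists_level_crossings_of_strictMonoOn_of_strictAntiOn (strictMonoOn_potentialProfile ha.le)
    (strictAntiOn_potentialProfile ha.le) (continuous_potentialProfile ha.le).continuousOn
    (profileArgmax_pos ha).le (profileArgmax_lt_one ha.le).le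
    ((potentialProfile_zero ha.ne').trans_lt hc) (potentialProfile_one.trans_lt hc) hcm

theorem criticalCoupling_pos (ha : 0 < a) : 0 < criticalCoupling a := by
  unfold criticalCoupling
  positivity

theorem potentialProfile_argmax (ha : 0 ≤ a) :
    potentialProfile a (profileArgmax a) = (criticalCoupling a)⁻¹ ^ 2 := by
  have ha₁ : 0 < a + 1 := by positivity
  have sq_rpow_half {y : ℝ} (hy : 0 ≤ y) (s : ℝ) : (y ^ (s / 2)) ^ 2 = y ^ s := by
    rw [← Real.rpow_mul_natCast hy, Nat.cast_ofNat, div_mul_cancel₀ s two_ne_zero]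
  calc potentialProfile a (profileArgmax a)
    _ = a ^ a / (a + 1) ^ a * (1 - a / (a + 1)) := by
      rw [potentialProfile, profileArgmax, Real.div_rpow ha ha₁.le]
    _ = a ^ a / (a + 1) ^ (a + 1) := by
      rw [Real.rpow_add_one ha₁.ne']
      field_simp
      ring
    _ = (criticalCoupling a)⁻¹ ^ 2 := by
      rw [criticalCoupling, inv_div, div_pow, sq_rpow_half ha, sq_rpow_half ha₁.le]

end Profile

section Threshold

variable {a lam L : ℝ}

theorem potentialProfile_argmax_lt_iff (ha : 0 < a) (hlam : 0 < lam) (hL : 0 ≤ L) :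
    potentialProfile a (profileArgmax a) < (L / lam) ^ 2 ↔ lam < criticalCoupling a * L := by
  have hu := criticalCoupling_pos ha
  rw [potentialProfile_argmax ha.le, sq_lt_sq₀ (by positivity) (by positivity),
    inv_lt_iff_one_lt_mul₀' hu, ← mul_div_assoc, one_lt_div hlam]

theorem lt_potentialProfile_argmax_iff (ha : 0 < a) (hlam : 0 < lam) (hL : 0 ≤ L) :
    (L / lam) ^ 2 < potentialProfile a (profileArgmax a) ↔ criticalCoupling a * L < lam := by
  have hu := criticalCoupling_pos ha
  rw [potentialProfile_argmax ha.le, sq_lt_sq₀ (by positivity) (by positivity),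
    ← one_div, lt_div_iff₀' hu, ← mul_div_assoc, div_lt_one hlam]

theorem potentialProfile_argmax_eq_iff (ha : 0 < a) (hlam : 0 < lam) (hL : 0 ≤ L) :
    potentialProfile a (profileArgmax a) = (L / lam) ^ 2 ↔ lam = criticalCoupling a * L := by
  have hu := criticalCoupling_pos ha
  rw [potentialProfile_argmax ha.le, sq_eq_sq₀ (by positivity) (by positivity),
    eq_div_iff hlam.ne', inv_mul_eq_iff_eq_mul₀ hu.ne']

end Threshold

/-- The effective potential `U(x) = λ² x^k (x - 1) + L² / x²`, meant for `x > 0`. -/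
noncomputable def effectivePotential (k lam L x : ℝ) : ℝ :=
  lam ^ 2 * x ^ k * (x - 1) + L ^ 2 / x ^ 2

section EffectivePotential

variable {k lam L x : ℝ}

theorem effectivePotential_eq_mul_sub (hlam : lam ≠ 0) (hx : 0 < x) :
    effectivePotential k lam L x =
      (lam / x) ^ 2 * ((L / lam) ^ 2 - potentialProfile (k + 2) x) := by
  have hpow : x ^ (k + 2) = x ^ k * x ^ 2 := by exact_mod_cast Real.rpow_add_natCast hx.ne' k 2
  rw [effectivePotential, potentialProfile, hpow]
  field_simp
  ring

theorem effectivePotential_pos_iff (hlam : lam ≠ 0) (hx : 0 < x) :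
    0 < effectivePotential k lam L x ↔ potentialProfile (k + 2) x < (L / lam) ^ 2 := by
  rw [effectivePotential_eq_mul_sub hlam hx, mul_pos_iff_of_pos_left (by positivity), sub_pos]

theorem effectivePotential_eq_zero_iff (hlam : lam ≠ 0) (hx : 0 < x) :
    effectivePotential k lam L x = 0 ↔ potentialProfile (k + 2) x = (L / lam) ^ 2 := by
  rw [effectivePotential_eq_mul_sub hlam hx, mul_eq_zero_iff_left (by positivity), sub_eq_zero,
    eq_comm]

theorem effectivePotential_neg_iff (hlam : lam ≠ 0) (hx : 0 < x) :
    effectivePotential k lam L x < 0 ↔ (L / lam) ^ 2 < potentialProfile (k + 2) x := by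
  rw [effectivePotential_eq_mul_sub hlam hx, ← neg_pos, ← mul_neg,
    mul_pos_iff_of_pos_left (by positivity), neg_sub, sub_pos]

theorem effectivePotential_pos_of_lt_criticalCoupling_mul (hk : -2 < k) (hlam : 0 < lam)
    (h : lam < criticalCoupling (k + 2) * L) (hx : 0 < x) :
    0 < effectivePotential k lam L x := by
  have ha : 0 < k + 2 := neg_lt_iff_pos_add.1 hk
  have hL : 0 < L := (mul_pos_iff_of_pos_left (criticalCoupling_pos ha)).1 (hlam.trans h)
  rw [effectivePotential_pos_iff hlam.ne' hx]
  calc potentialProfile (k + 2) x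
    _ ≤ potentialProfile (k + 2) (profileArgmax (k + 2)) :=
      potentialProfile_le_apply_argmax ha.le hx.le
    _ < (L / lam) ^ 2 := (potentialProfile_argmax_lt_iff ha hlam hL.le).2 h

theorem effectivePotential_argmax_eq_zero (hk : -2 < k) (hlam : 0 < lam)
    (h : lam = criticalCoupling (k + 2) * L) :
    effectivePotential k lam L (profileArgmax (k + 2)) = 0 := by
  have ha : 0 < k + 2 := neg_lt_iff_pos_add.1 hk
  have hL : 0 < L := (mul_pos_iff_of_pos_left (criticalCoupling_pos ha)).1 (h ▸ hlam)
  rw [effectivePotential_eq_zero_iff hlam.ne' (profileArgmax_pos ha)]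
  exact (potentialProfile_argmax_eq_iff ha hlam hL.le).2 h

theorem effectivePotential_pos_of_ne_argmax (hk : -2 < k) (hlam : 0 < lam)
    (h : lam = criticalCoupling (k + 2) * L) (hx : 0 < x) (hne : x ≠ profileArgmax (k + 2)) :
    0 < effectivePotential k lam L x := by
  have ha : 0 < k + 2 := neg_lt_iff_pos_add.1 hk
  have hL : 0 < L := (mul_pos_iff_of_pos_left (criticalCoupling_pos ha)).1 (h ▸ hlam)
  rw [effectivePotential_pos_iff hlam.ne' hx]
  calc potentialProfile (k + 2) x
    _ < potentialProfile (k + 2) (profileArgmax (k + 2)) :=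
      potentialProfile_lt_apply_argmax ha.le hx.le hne
    _ = (L / lam) ^ 2 := (potentialProfile_argmax_eq_iff ha hlam hL.le).2 h

theorem exists_turning_points_of_criticalCoupling_mul_lt (hk : -2 < k) (hL : 0 < L)
    (h : criticalCoupling (k + 2) * L < lam) :
    ∃ p ∈ Ioo 0 (profileArgmax (k + 2)), ∃ q ∈ Ioo (profileArgmax (k + 2)) 1,
      effectivePotential k lam L p = 0 ∧ effectivePotential k lam L q = 0 ∧
      (∀ x ∈ Ioo p q, effectivePotential k lam L x < 0) ∧
      (∀ x ∈ Ioo 0 p, 0 < effectivePotential k lam L x) ∧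
      ∀ x ∈ Ioi q, 0 < effectivePotential k lam L x := by
  have ha : 0 < k + 2 := neg_lt_iff_pos_add.1 hk
  have hlam : 0 < lam := (mul_pos (criticalCoupling_pos ha) hL).trans h
  obtain ⟨p, hp, q, hq, hgp, hgq, hmid, hleft, hright⟩ :=
    exists_potentialProfile_level_crossings ha (by positivity)
      ((lt_potentialProfile_argmax_iff ha hlam hL.le).2 h)
  have hq₀ : 0 < q := (profileArgmax_pos ha).trans hq.1
  exact ⟨p, hp, q, hq,
    (effectivePotential_eq_zero_iff hlam.ne' hp.1).2 hgp,
    (effectivePotential_eq_zero_iff hlam.ne' hq₀).2 hgq,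
    fun x hx ↦ (effectivePotential_neg_iff hlam.ne' (hp.1.trans hx.1)).2 (hmid x hx),
    fun x hx ↦ (effectivePotential_pos_iff hlam.ne' hx.1).2 (hleft x (Ioo_subset_Ico_self hx)),
    fun x hx ↦ (effectivePotential_pos_iff hlam.ne' (hq₀.trans hx)).2 (hright x hx)⟩

theorem subsingleton_effectivePotential_zeros_Ioc (hk : -2 < k) (hlam : lam ≠ 0) :
    {x ∈ Ioc 0 (profileArgmax (k + 2)) | effectivePotential k lam L x = 0}.Subsingleton := by
  have ha : 0 < k + 2 := neg_lt_iff_pos_add.1 hk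
  rintro x ⟨hx, hVx⟩ y ⟨hy, hVy⟩
  rw [effectivePotential_eq_zero_iff hlam hx.1] at hVx
  rw [effectivePotential_eq_zero_iff hlam hy.1] at hVy
  exact (strictMonoOn_potentialProfile ha.le).injOn (Ioc_subset_Icc_self hx)
    (Ioc_subset_Icc_self hy) (hVx.trans hVy.symm)

theorem subsingleton_effectivePotential_zeros_Ici (hk : -2 < k) (hlam : lam ≠ 0) :
    {x ∈ Ici (profileArgmax (k + 2)) | effectivePotential k lam L x = 0}.Subsingleton := by
  have ha : 0 < k + 2 := neg_lt_iff_pos_add.1 hk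
  rintro x ⟨hx, hVx⟩ y ⟨hy, hVy⟩
  rw [effectivePotential_eq_zero_iff hlam ((profileArgmax_pos ha).trans_le hx)] at hVx
  rw [effectivePotential_eq_zero_iff hlam ((profileArgmax_pos ha).trans_le hy)] at hVy
  exact (strictAntiOn_potentialProfile ha.le).injOn hx hy (hVx.trans hVy.symm)

end EffectivePotential

/-- Classification of the turning points of the effective potential
`U(x) = λ²x^k(x−1) + L²/x²` on `(0,∞)`, according to the position of `λ` with respect to
`u_*·L`, where `x_* = (k+2)/(k+3)` and `u_* = (k+3)^{(k+3)/2}/(k+2)^{(k+2)/2}`. -/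
theorem effective_potential_turning_points (k lam L : ℝ)
    (hk : -2 < k) (hlam : 0 < lam) (hL : 0 < L)
    (U : ℝ → ℝ)
    (hU : ∀ x : ℝ, 0 < x → U x = lam ^ 2 * x ^ k * (x - 1) + L ^ 2 / x ^ 2)
    (xstar ustar : ℝ)
    (hxstar : xstar = (k + 2) / (k + 3))
    (hustar : ustar = (k + 3) ^ ((k + 3) / 2) / (k + 2) ^ ((k + 2) / 2)) :
    (lam < ustar * L → ∀ x : ℝ, 0 < x → 0 < U x)
    ∧ (lam = ustar * L → U xstar = 0 ∧ ∀ x : ℝ, 0 < x → x ≠ xstar → 0 < U x)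
    ∧ (ustar * L < lam →
        ∃! p : ℝ × ℝ, 0 < p.1 ∧ p.1 < xstar ∧ xstar < p.2 ∧ p.2 < 1
          ∧ U p.1 = 0 ∧ U p.2 = 0
          ∧ (∀ x : ℝ, p.1 < x → x < p.2 → U x < 0)
          ∧ (∀ x : ℝ, 0 < x → x < p.1 → 0 < U x)
          ∧ (∀ x : ℝ, p.2 < x → 0 < U x)) := by
  obtain rfl : xstar = profileArgmax (k + 2) := by rw [hxstar, profileArgmax]; ring
  obtain rfl : ustar = criticalCoupling (k + 2) := by rw [hustar, criticalCoupling]; ring_nf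
  have hUV {x : ℝ} (hx : 0 < x) : U x = effectivePotential k lam L x := hU x hx
  have hm : 0 < profileArgmax (k + 2) := profileArgmax_pos (neg_lt_iff_pos_add.1 hk)
  refine ⟨fun h x hx ↦ ?_, fun h ↦ ⟨?_, fun x hx hne ↦ ?_⟩, fun h ↦ ?_⟩
  · exact hUV hx ▸ effectivePotential_pos_of_lt_criticalCoupling_mul hk hlam h hx
  · exact hUV hm ▸ effectivePotential_argmax_eq_zero hk hlam h
  · exact hUV hx ▸ effectivePotential_pos_of_ne_argmax hk hlam h hx hne
  · obtain ⟨p, hp, q, hq, hVp, hVq, hmid, hleft, hright⟩ :=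
      exists_turning_points_of_criticalCoupling_mul_lt hk hL h
    have hq₀ : 0 < q := hm.trans hq.1
    refine ⟨(p, q), ⟨hp.1, hp.2, hq.1, hq.2, hUV hp.1 ▸ hVp, hUV hq₀ ▸ hVq,
      fun x hpx hxq ↦ hUV (hp.1.trans hpx) ▸ hmid x ⟨hpx, hxq⟩,
      fun x hx hxp ↦ hUV hx ▸ hleft x ⟨hx, hxp⟩,
      fun x hqx ↦ hUV (hq₀.trans hqx) ▸ hright x hqx⟩, ?_⟩
    rintro ⟨r, s⟩ ⟨hr₀, hr, hs, -, hUr, hUs, -⟩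
    have hs₀ : 0 < s := hm.trans hs
    exact Prod.ext
      (subsingleton_effectivePotential_zeros_Ioc hk hlam.ne'
        ⟨⟨hr₀, hr.le⟩, hUV hr₀ ▸ hUr⟩ ⟨Ioo_subset_Ioc_self hp, hVp⟩)
      (subsingleton_effectivePotential_zeros_Ici hk hlam.ne'
        ⟨hs.le, hUV hs₀ ▸ hUs⟩ ⟨hq.1.le, hVq⟩)
end

section
/- Let q, γ ∈ ℂ∖{0} and let Q₊, Q₋ : ℂ∖{0} → ℂ be functions satisfying the QQ-system γ·Q₊(qλ)·Q₋(q⁻¹λ) − γ⁻¹·Q₊(q⁻¹λ)·Q₋(qλ) = 1 for every λ ∈ ℂ∖{0}. Suppose λ* ∈ ℂ∖{0} satisfies Q₊(λ*) = 0. Then γ·Q₊(q²λ*)·Q₋(λ*) = 1 and γ⁻¹·Q₊(q⁻²λ*)·Q₋(λ*) = −1; in particular Q₊(q²λ*) ≠ 0, Q₊(q⁻²λ*) ≠ 0, Q₋(λ*) ≠ 0, and γ²·Q₊(q²λ*) = −Q₊(q⁻²λ*), i.e. γ⁻²·Q₊(q⁻²λ*)/Q₊(q²λ*) = −1. -/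
/-!
At `q * x` one argument of each product in the `QQ`-system returns to `x`, so if `Q₊ x = 0` only
`γ Q₊(q² x) Q₋(x) = 1` remains. The system is invariant under `(q, γ) ↦ (q⁻¹, -γ⁻¹)`, which turns
this identity into its companion at `q⁻² x`; eliminating `Q₋(x)` gives the Bethe equation.
-/

/-- The `QQ`-system (quantum Wronskian condition) for `Qp = Q₊` and `Qm = Q₋`, with shift `q` and
twist `γ`. It is imposed only away from `0`, so the values of `Qp` and `Qm` at `0` are arbitrary
when `q ≠ 0`. -/
def IsQQSystem {K L : Type*} [GroupWithZero K] [DivisionRing L] (q : K) (γ : L)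
    (Qp Qm : K → L) : Prop :=
  ∀ x : K, x ≠ 0 → γ * Qp (q * x) * Qm (q⁻¹ * x) - γ⁻¹ * Qp (q⁻¹ * x) * Qm (q * x) = 1

namespace IsQQSystem

variable {K L : Type*} [GroupWithZero K] [DivisionRing L] {q x : K} {γ : L} {Qp Qm : K → L}

theorem inv_neg_inv (h : IsQQSystem q γ Qp Qm) : IsQQSystem q⁻¹ (-γ⁻¹) Qp Qm := by
  intro x hx
  rw [← h x hx, inv_neg, inv_inv, inv_inv]
  noncomm_ring

theorem mul_apply_sq_mul_eq_one (h : IsQQSystem q γ Qp Qm) (hq : q ≠ 0) (hx : x ≠ 0)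
    (hzero : Qp x = 0) : γ * Qp (q ^ 2 * x) * Qm x = 1 := by
  simpa only [inv_mul_cancel_left₀ hq, hzero, mul_zero, zero_mul, sub_zero, ← mul_assoc, ← pow_two]
    using h (q * x) (mul_ne_zero hq hx)

theorem inv_mul_apply_inv_sq_mul_eq_neg_one (h : IsQQSystem q γ Qp Qm) (hq : q ≠ 0) (hx : x ≠ 0)
    (hzero : Qp x = 0) : γ⁻¹ * Qp (q⁻¹ ^ 2 * x) * Qm x = -1 := by
  simpa only [neg_mul, neg_eq_iff_eq_neg] using
    h.inv_neg_inv.mul_apply_sq_mul_eq_one (inv_ne_zero hq) hx hzero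

theorem apply_sq_mul_ne_zero (h : IsQQSystem q γ Qp Qm) (hq : q ≠ 0) (hx : x ≠ 0)
    (hzero : Qp x = 0) : Qp (q ^ 2 * x) ≠ 0 :=
  right_ne_zero_of_mul <| left_ne_zero_of_mul <|
    ne_zero_of_eq_one (h.mul_apply_sq_mul_eq_one hq hx hzero)

theorem right_apply_ne_zero (h : IsQQSystem q γ Qp Qm) (hq : q ≠ 0) (hx : x ≠ 0)
    (hzero : Qp x = 0) : Qm x ≠ 0 :=
  right_ne_zero_of_mul <| ne_zero_of_eq_one (h.mul_apply_sq_mul_eq_one hq hx hzero)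

theorem sq_mul_apply_sq_mul_eq_neg (h : IsQQSystem q γ Qp Qm) (hq : q ≠ 0) (hγ : γ ≠ 0)
    (hx : x ≠ 0) (hzero : Qp x = 0) : γ ^ 2 * Qp (q ^ 2 * x) = -Qp (q⁻¹ ^ 2 * x) := by
  apply mul_right_cancel₀ (h.right_apply_ne_zero hq hx hzero)
  calc γ ^ 2 * Qp (q ^ 2 * x) * Qm x
      = γ * (γ * Qp (q ^ 2 * x) * Qm x) := by simp only [pow_two, mul_assoc]
    _ = -(γ * (γ⁻¹ * Qp (q⁻¹ ^ 2 * x) * Qm x)) := by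
      rw [h.mul_apply_sq_mul_eq_one hq hx hzero,
        h.inv_mul_apply_inv_sq_mul_eq_neg_one hq hx hzero, mul_neg, neg_neg]
    _ = -Qp (q⁻¹ ^ 2 * x) * Qm x := by rw [mul_assoc γ⁻¹, mul_inv_cancel_left₀ hγ, neg_mul]

theorem inv_sq_mul_apply_div_apply_eq_neg_one (h : IsQQSystem q γ Qp Qm) (hq : q ≠ 0)
    (hγ : γ ≠ 0) (hx : x ≠ 0) (hzero : Qp x = 0) :
    γ⁻¹ ^ 2 * Qp (q⁻¹ ^ 2 * x) / Qp (q ^ 2 * x) = -1 := by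
  rw [div_eq_iff (h.apply_sq_mul_ne_zero hq hx hzero), inv_pow,
    inv_mul_eq_iff_eq_mul₀ (pow_ne_zero 2 hγ), neg_one_mul, mul_neg,
    h.sq_mul_apply_sq_mul_eq_neg hq hγ hx hzero, neg_neg]

end IsQQSystem

theorem QQ_system_bethe_equations_general {K L : Type*} [GroupWithZero K] [DivisionRing L]
    {q : K} {γ : L} (hq : q ≠ 0) (hγ : γ ≠ 0) {Qp Qm : K → L} (hQQ : IsQQSystem q γ Qp Qm)
    {x : K} (hx : x ≠ 0) (hzero : Qp x = 0) :
    γ * Qp (q ^ 2 * x) * Qm x = 1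
    ∧ γ⁻¹ * Qp (q⁻¹ ^ 2 * x) * Qm x = -1
    ∧ Qp (q ^ 2 * x) ≠ 0
    ∧ Qp (q⁻¹ ^ 2 * x) ≠ 0
    ∧ Qm x ≠ 0
    ∧ γ ^ 2 * Qp (q ^ 2 * x) = -Qp (q⁻¹ ^ 2 * x)
    ∧ γ⁻¹ ^ 2 * Qp (q⁻¹ ^ 2 * x) / Qp (q ^ 2 * x) = -1 :=
  ⟨hQQ.mul_apply_sq_mul_eq_one hq hx hzero,
    hQQ.inv_mul_apply_inv_sq_mul_eq_neg_one hq hx hzero,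
    hQQ.apply_sq_mul_ne_zero hq hx hzero,
    hQQ.inv_neg_inv.apply_sq_mul_ne_zero (inv_ne_zero hq) hx hzero,
    hQQ.right_apply_ne_zero hq hx hzero,
    hQQ.sq_mul_apply_sq_mul_eq_neg hq hγ hx hzero,
    hQQ.inv_sq_mul_apply_div_apply_eq_neg_one hq hγ hx hzero⟩

/-- Zeroes of `Q₊` satisfy the Bethe equations for Quantum KdV: if the `QQ`-system holds
on `ℂ∖{0}` and `Q₊(λ*) = 0` with `λ* ≠ 0`, then `γ Q₊(q²λ*) Q₋(λ*) = 1`,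
`γ⁻¹ Q₊(q⁻²λ*) Q₋(λ*) = −1`, the indicated values are nonzero,
`γ² Q₊(q²λ*) = −Q₊(q⁻²λ*)`, and `γ⁻² Q₊(q⁻²λ*)/Q₊(q²λ*) = −1`. -/
theorem QQ_system_bethe_equations (q γ : ℂ) (hq : q ≠ 0) (hγ : γ ≠ 0)
    (Qp Qm : ℂ → ℂ)
    (hQQ : ∀ lam : ℂ, lam ≠ 0 →
      γ * Qp (q * lam) * Qm (q⁻¹ * lam) - γ⁻¹ * Qp (q⁻¹ * lam) * Qm (q * lam) = 1)
    (lam₀ : ℂ) (hlam₀ : lam₀ ≠ 0) (hzero : Qp lam₀ = 0) :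
    γ * Qp (q ^ 2 * lam₀) * Qm lam₀ = 1
    ∧ γ⁻¹ * Qp (q⁻¹ ^ 2 * lam₀) * Qm lam₀ = -1
    ∧ Qp (q ^ 2 * lam₀) ≠ 0
    ∧ Qp (q⁻¹ ^ 2 * lam₀) ≠ 0
    ∧ Qm lam₀ ≠ 0
    ∧ γ ^ 2 * Qp (q ^ 2 * lam₀) = -Qp (q⁻¹ ^ 2 * lam₀)
    ∧ γ⁻¹ ^ 2 * Qp (q⁻¹ ^ 2 * lam₀) / Qp (q ^ 2 * lam₀) = -1 :=
  QQ_system_bethe_equations_general hq hγ hQQ hlam₀ hzero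
end

section
/- Let q, γ ∈ ℂ∖{0} and let Q₊, Q₋ : ℂ∖{0} → ℂ satisfy the QQ-system γ·Q₊(qλ)·Q₋(q⁻¹λ) − γ⁻¹·Q₊(q⁻¹λ)·Q₋(qλ) = 1 for every λ ∈ ℂ∖{0}. Define T₁(λ) = γ²·Q₊(q²λ)·Q₋(q⁻²λ) − γ⁻²·Q₊(q⁻²λ)·Q₋(q²λ). Then for every λ ∈ ℂ∖{0}: T₁(λ)·Q₊(λ) = γ·Q₊(q²λ) + γ⁻¹·Q₊(q⁻²λ) and T₁(λ)·Q₋(λ) = γ⁻¹·Q₋(q²λ) + γ·Q₋(q⁻²λ). -/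
/-!
Write `W(λ)` for the left-hand side of the `QQ`-system. Then `T₁(λ) Q₊(λ)` equals
`γ Q₊(q²λ) W(q⁻¹λ) + γ⁻¹ Q₊(q⁻²λ) W(qλ)` identically, because the two terms in
`Q₊(q²λ) Q₊(q⁻²λ) Q₋(λ)` cancel; the `QQ`-system sets both values of `W` to `1`. The case of `Q₋` is
the same with the roles of the two functions exchanged.
-/

section QuantumWronskian

variable {G X R : Type*} [Group G] [MulAction G X] [CommRing R]

/-- The quantum Wronskian of `P` and `Q` for the shift `x ↦ g • x`, with twists `a` and `b`. The
`QQ`-system says that it is `1` for `g = q`, `a = γ`, `b = γ⁻¹`, and `T₁` is its value for `g = q²`,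
`a = γ²`, `b = γ⁻²`. The twists are independent of each other, and the shift is an arbitrary group
action, so that `ℂˣ` acting on `ℂ` is an instance. -/
def quantumWronskian (g : G) (a b : R) (P Q : X → R) (x : X) : R :=
  a * P (g • x) * Q (g⁻¹ • x) - b * P (g⁻¹ • x) * Q (g • x)

variable (g : G) (a b : R) (P Q : X → R) (x : X)

lemma quantumWronskian_smul :
    quantumWronskian g a b P Q (g • x) = a * P (g ^ 2 • x) * Q x - b * P x * Q (g ^ 2 • x) := by
  rw [quantumWronskian, inv_smul_smul, smul_smul, ← sq]

lemma quantumWronskian_inv_smul :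
    quantumWronskian g a b P Q (g⁻¹ • x) =
      a * P x * Q (g⁻¹ ^ 2 • x) - b * P (g⁻¹ ^ 2 • x) * Q x := by
  rw [quantumWronskian, smul_inv_smul, smul_smul, ← sq]

lemma quantumWronskian_sq_mul_left :
    quantumWronskian (g ^ 2) (a ^ 2) (b ^ 2) P Q x * P x =
      a * P (g ^ 2 • x) * quantumWronskian g a b P Q (g⁻¹ • x) +
        b * P (g⁻¹ ^ 2 • x) * quantumWronskian g a b P Q (g • x) := by
  rw [quantumWronskian_smul, quantumWronskian_inv_smul, quantumWronskian, ← inv_pow]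
  ring

lemma quantumWronskian_sq_mul_right :
    quantumWronskian (g ^ 2) (a ^ 2) (b ^ 2) P Q x * Q x =
      b * Q (g ^ 2 • x) * quantumWronskian g a b P Q (g⁻¹ • x) +
        a * Q (g⁻¹ ^ 2 • x) * quantumWronskian g a b P Q (g • x) := by
  rw [quantumWronskian_smul, quantumWronskian_inv_smul, quantumWronskian, ← inv_pow]
  ring

variable {g a b P Q x}

theorem TQ_system_general (h_smul : quantumWronskian g a b P Q (g • x) = 1)
    (h_inv_smul : quantumWronskian g a b P Q (g⁻¹ • x) = 1) :
    quantumWronskian (g ^ 2) (a ^ 2) (b ^ 2) P Q x * P x =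
        a * P (g ^ 2 • x) + b * P (g⁻¹ ^ 2 • x) ∧
      quantumWronskian (g ^ 2) (a ^ 2) (b ^ 2) P Q x * Q x =
        b * Q (g ^ 2 • x) + a * Q (g⁻¹ ^ 2 • x) := by
  rw [quantumWronskian_sq_mul_left, quantumWronskian_sq_mul_right, h_smul, h_inv_smul]
  simp only [mul_one, and_self]

end QuantumWronskian

/-- The `TQ`-system: if `Q₊, Q₋` satisfy the `QQ`-system on `ℂ∖{0}` and
`T₁(λ) = γ² Q₊(q²λ) Q₋(q⁻²λ) − γ⁻² Q₊(q⁻²λ) Q₋(q²λ)`, then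
`T₁(λ)Q₊(λ) = γ Q₊(q²λ) + γ⁻¹ Q₊(q⁻²λ)` and `T₁(λ)Q₋(λ) = γ⁻¹ Q₋(q²λ) + γ Q₋(q⁻²λ)`. -/
theorem TQ_system (q γ : ℂ) (hq : q ≠ 0) (hγ : γ ≠ 0)
    (Qp Qm : ℂ → ℂ)
    (hQQ : ∀ lam : ℂ, lam ≠ 0 →
      γ * Qp (q * lam) * Qm (q⁻¹ * lam) - γ⁻¹ * Qp (q⁻¹ * lam) * Qm (q * lam) = 1)
    (T₁ : ℂ → ℂ)
    (hT₁ : ∀ lam : ℂ, T₁ lam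
      = γ ^ 2 * Qp (q ^ 2 * lam) * Qm (q⁻¹ ^ 2 * lam)
        - γ⁻¹ ^ 2 * Qp (q⁻¹ ^ 2 * lam) * Qm (q ^ 2 * lam)) :
    ∀ lam : ℂ, lam ≠ 0 →
      (T₁ lam * Qp lam = γ * Qp (q ^ 2 * lam) + γ⁻¹ * Qp (q⁻¹ ^ 2 * lam))
      ∧ (T₁ lam * Qm lam = γ⁻¹ * Qm (q ^ 2 * lam) + γ * Qm (q⁻¹ ^ 2 * lam)) := by
  intro lam hlam
  lift q to ℂˣ using hq.isUnit
  have wronskian_eq_one (z : ℂ) (hz : z ≠ 0) : quantumWronskian q γ γ⁻¹ Qp Qm z = 1 := by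
    simpa [quantumWronskian, Units.smul_def] using hQQ z hz
  simpa [quantumWronskian, Units.smul_def, hT₁] using
    TQ_system_general (wronskian_eq_one (q • lam) ((smul_ne_zero_iff_ne q).2 hlam))
      (wronskian_eq_one (q⁻¹ • lam) ((smul_ne_zero_iff_ne q⁻¹).2 hlam))
end

section
/- Let k > −2 and l be real numbers and let λ > 0. Set k̄ = (k+2)/(k+3), l̄ = (l+1/2)/(k+3) − 1/2, λ̄ = (λ/(k+3))^{2/(k+3)}, and define φ : (0,∞) → (0,∞) by φ(x) = (λ/(k+3))²·x^{k+3} (real powers). Then for every x > 0: φ′(x)²·( l̄(l̄+1)/φ(x)² + 1/φ(x) − φ(x)^{k̄−2}·λ̄ ) − (1/2)·( φ‴(x)/φ′(x) − (3/2)·(φ″(x)/φ′(x))² ) = l(l+1)/x² + λ²·x^{k}·(x−1). -/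
/-!
A power map `φ = A xⁿ` has Schwarzian derivative `(1 - n²) / (2 x²)`, so it takes `(ν² - 1/4) / z²`
to `(n² ν² - 1/4) / x²`: on `l (l + 1) = (l + 1/2)² - 1/4` it multiplies `l + 1/2` by `n`. It takes
a monomial `z^m`, which transforms by `φ'²` alone, to `n² A^(m + 2) x^(n (m + 2) - 2)`. With
`n = k + 3` and `A = (λ / n)²`, the exponents `m = -1` and `m = k̄ - 2` give `λ² x^(k + 1)` and,
after multiplication by `λ̄`, `λ² x^k`.
-/

open Set

/-- The Schwarzian derivative `{φ, x}`. It is meaningful only where `φ` is three times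
differentiable and `deriv φ x ≠ 0`. -/
noncomputable def schwarzian (φ : ℝ → ℝ) (x : ℝ) : ℝ :=
  deriv (deriv (deriv φ)) x / deriv φ x - (3 / 2) * (deriv (deriv φ) x / deriv φ x) ^ 2

/-- The potential `V^φ` obtained from the Schrödinger potential `V` by the change of coordinate
`z = φ x`. -/
noncomputable def pullbackPotential (φ V : ℝ → ℝ) (x : ℝ) : ℝ :=
  (deriv φ x) ^ 2 * V (φ x) - (1 / 2) * schwarzian φ x

/-- The potential of the BLZ oper, with parameters `k̄`, `l̄` and `λ̄`. -/
noncomputable def blzPotential (kbar lbar lambar z : ℝ) : ℝ :=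
  lbar * (lbar + 1) / z ^ 2 + 1 / z - z ^ (kbar - 2) * lambar

section PowerMap

variable {φ : ℝ → ℝ} {A n x : ℝ}

theorem eqOn_deriv_of_eqOn_const_mul_rpow (hφ : EqOn φ (fun y ↦ A * y ^ n) (Ioi 0)) :
    EqOn (deriv φ) (fun y ↦ A * n * y ^ (n - 1)) (Ioi 0) := fun y hy ↦ by
  have hpow := (Real.hasDerivAt_rpow_const (p := n) (Or.inl (ne_of_gt hy))).const_mul A
  rw [(hφ.eventuallyEq_of_mem (Ioi_mem_nhds hy)).deriv_eq, hpow.deriv]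
  exact (mul_assoc _ _ _).symm

theorem schwarzian_of_eqOn_const_mul_rpow (hA : A ≠ 0) (hn : n ≠ 0)
    (hφ : EqOn φ (fun y ↦ A * y ^ n) (Ioi 0)) (hx : 0 < x) :
    schwarzian φ x = (1 - n ^ 2) / (2 * x ^ 2) := by
  have hφ' := eqOn_deriv_of_eqOn_const_mul_rpow hφ
  have hφ'' := eqOn_deriv_of_eqOn_const_mul_rpow hφ'
  have hφ''' := eqOn_deriv_of_eqOn_const_mul_rpow hφ''
  have hxn : x ^ n ≠ 0 := (Real.rpow_pos_of_pos hx n).ne'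
  simp only [schwarzian, hφ' hx, hφ'' hx, hφ''' hx, Real.rpow_sub_one hx.ne']
  field_simp
  ring

theorem pullbackPotential_inv_sq_add_of_eqOn_const_mul_rpow (hA : A ≠ 0) (hn : n ≠ 0)
    (hφ : EqOn φ (fun y ↦ A * y ^ n) (Ioi 0)) (hx : 0 < x) (ν : ℝ) (W : ℝ → ℝ) :
    pullbackPotential φ (fun z ↦ (ν ^ 2 - 1 / 4) / z ^ 2 + W z) x =
      ((n * ν) ^ 2 - 1 / 4) / x ^ 2 + (deriv φ x) ^ 2 * W (φ x) := by
  have hxn : x ^ n ≠ 0 := (Real.rpow_pos_of_pos hx n).ne'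
  have logDeriv_eq : deriv φ x / φ x = n / x := by
    simp only [eqOn_deriv_of_eqOn_const_mul_rpow hφ hx, hφ hx, Real.rpow_sub_one hx.ne']
    field_simp
  calc pullbackPotential φ (fun z ↦ (ν ^ 2 - 1 / 4) / z ^ 2 + W z) x
      = (ν ^ 2 - 1 / 4) * (deriv φ x / φ x) ^ 2 - (1 / 2) * schwarzian φ x
          + (deriv φ x) ^ 2 * W (φ x) := by
        rw [pullbackPotential]; ring
    _ = ((n * ν) ^ 2 - 1 / 4) / x ^ 2 + (deriv φ x) ^ 2 * W (φ x) := by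
        rw [logDeriv_eq, schwarzian_of_eqOn_const_mul_rpow hA hn hφ hx]
        field_simp
        ring

theorem deriv_sq_mul_rpow_of_eqOn_const_mul_rpow (hA : 0 < A)
    (hφ : EqOn φ (fun y ↦ A * y ^ n) (Ioi 0)) (hx : 0 < x) (m : ℝ) :
    (deriv φ x) ^ 2 * φ x ^ m = n ^ 2 * A ^ (m + 2) * x ^ (n * (m + 2) - 2) := by
  have hxn : 0 < x ^ n := Real.rpow_pos_of_pos hx n
  calc (deriv φ x) ^ 2 * φ x ^ m
      = n ^ 2 * ((A * x ^ n) ^ m * (A * x ^ n) ^ 2) / x ^ 2 := by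
        simp only [eqOn_deriv_of_eqOn_const_mul_rpow hφ hx, hφ hx, Real.rpow_sub_one hx.ne']
        ring
    _ = n ^ 2 * (A * x ^ n) ^ (m + 2) / x ^ 2 := by
        rw [Real.rpow_add (mul_pos hA hxn), Real.rpow_two]
    _ = n ^ 2 * A ^ (m + 2) * x ^ (n * (m + 2) - 2) := by
        rw [Real.mul_rpow hA.le hxn.le, ← Real.rpow_mul hx.le, Real.rpow_sub hx, Real.rpow_two]
        ring

theorem deriv_sq_div_of_eqOn_const_mul_rpow (hA : A ≠ 0)
    (hφ : EqOn φ (fun y ↦ A * y ^ n) (Ioi 0)) (hx : 0 < x) :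
    (deriv φ x) ^ 2 / φ x = n ^ 2 * A * x ^ (n - 2) := by
  have hxn : x ^ n ≠ 0 := (Real.rpow_pos_of_pos hx n).ne'
  simp only [eqOn_deriv_of_eqOn_const_mul_rpow hφ hx, hφ hx, Real.rpow_sub_one hx.ne',
    Real.rpow_sub hx, Real.rpow_two]
  field_simp

end PowerMap

theorem sq_rpow_mul_rpow_two_div {c n : ℝ} (hc : 0 < c) (hn : n ≠ 0) :
    (c ^ 2) ^ ((n - 1) / n) * c ^ (2 / n) = c ^ 2 := by
  have hexp : 2 * ((n - 1) / n) + 2 / n = 2 := by field_simp; ring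
  rw [← Real.rpow_two, ← Real.rpow_mul hc.le, ← Real.rpow_add hc, hexp]

theorem blzPotential_sub_half (kbar ν lambar : ℝ) :
    blzPotential kbar (ν - 1 / 2) lambar = fun z ↦
      (ν ^ 2 - 1 / 4) / z ^ 2 + (1 / z - z ^ (kbar - 2) * lambar) := by
  funext z
  rw [blzPotential]
  ring

theorem pullbackPotential_blzPotential_of_eqOn_sq_mul_rpow {φ : ℝ → ℝ} {c n x : ℝ} (hc : 0 < c)
    (hn : n ≠ 0) (hφ : EqOn φ (fun y ↦ c ^ 2 * y ^ n) (Ioi 0)) (hx : 0 < x) (ν : ℝ) :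
    pullbackPotential φ (blzPotential ((n - 1) / n) (ν - 1 / 2) (c ^ (2 / n))) x =
      ((n * ν) ^ 2 - 1 / 4) / x ^ 2 + (n * c) ^ 2 * (x ^ (n - 2) - x ^ (n - 3)) := by
  have hA : 0 < c ^ 2 := pow_pos hc 2
  have hinv : (deriv φ x) ^ 2 * (1 / φ x) = (n * c) ^ 2 * x ^ (n - 2) := by
    rw [mul_one_div, deriv_sq_div_of_eqOn_const_mul_rpow hA.ne' hφ hx, mul_pow]
  have hmonomial : (deriv φ x) ^ 2 * (φ x ^ ((n - 1) / n - 2) * c ^ (2 / n)) =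
      (n * c) ^ 2 * x ^ (n - 3) := by
    have hexp : n * ((n - 1) / n) - 2 = n - 3 := by rw [mul_div_cancel₀ _ hn]; ring
    rw [← mul_assoc, deriv_sq_mul_rpow_of_eqOn_const_mul_rpow hA hφ hx, sub_add_cancel, hexp,
      mul_right_comm, mul_assoc (n ^ 2), sq_rpow_mul_rpow_two_div hc hn, mul_pow]
  rw [blzPotential_sub_half, pullbackPotential_inv_sq_add_of_eqOn_const_mul_rpow hA.ne' hn hφ hx,
    mul_sub, hinv, hmonomial, mul_sub]

theorem blz_oper_change_of_variables_general {k l lam x : ℝ} {φ : ℝ → ℝ}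
    (hc : 0 < lam / (k + 3))
    (hφ : EqOn φ (fun y ↦ (lam / (k + 3)) ^ 2 * y ^ (k + 3)) (Ioi 0)) (hx : 0 < x) :
    pullbackPotential φ
        (blzPotential ((k + 2) / (k + 3)) ((l + 1 / 2) / (k + 3) - 1 / 2)
          ((lam / (k + 3)) ^ (2 / (k + 3)))) x =
      l * (l + 1) / x ^ 2 + lam ^ 2 * x ^ k * (x - 1) := by
  have hn : k + 3 ≠ 0 := fun h ↦ by simp [h] at hc
  have hk₁ : k + 2 = k + 3 - 1 := by ring
  have hk₂ : k + 3 - 2 = k + 1 := by ring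
  rw [hk₁, pullbackPotential_blzPotential_of_eqOn_sq_mul_rpow hc hn hφ hx, mul_div_cancel₀ _ hn,
    mul_div_cancel₀ _ hn, hk₂, add_sub_cancel_right, Real.rpow_add_one hx.ne']
  ring

/-- The (λ-dependent) change of variables `z = φ(x) = (λ/(k+3))² x^{k+3}`, together with the
parameter change `k̄ = (k+2)/(k+3)`, `l̄ + 1/2 = (l+1/2)/(k+3)`, `λ̄ = (λ/(k+3))^{2/(k+3)}`,
transforms the BLZ potential `l̄(l̄+1)/z² + 1/z − z^{k̄−2}λ̄` into the potential
`l(l+1)/x² + λ²x^k(x−1)` of the operator `L^G` with `d₀ = 0`. -/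
theorem blz_oper_change_of_variables (k l lam : ℝ) (hk : -2 < k) (hlam : 0 < lam)
    (kbar lbar lambar : ℝ)
    (hkbar : kbar = (k + 2) / (k + 3))
    (hlbar : lbar = (l + 1/2) / (k + 3) - 1/2)
    (hlambar : lambar = (lam / (k + 3)) ^ (2 / (k + 3)))
    (φ : ℝ → ℝ)
    (hφ : ∀ x : ℝ, 0 < x → φ x = (lam / (k + 3)) ^ 2 * x ^ (k + 3)) :
    ∀ x : ℝ, 0 < x →
      (deriv φ x) ^ 2
          * (lbar * (lbar + 1) / (φ x) ^ 2 + 1 / φ x - (φ x) ^ (kbar - 2) * lambar)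
        - (1/2) * (deriv (deriv (deriv φ)) x / deriv φ x
            - (3/2) * (deriv (deriv φ) x / deriv φ x) ^ 2)
      = l * (l + 1) / x ^ 2 + lam ^ 2 * x ^ k * (x - 1) := by
  subst hkbar hlbar hlambar
  exact fun x hx ↦ blz_oper_change_of_variables_general (div_pos hlam (by linarith)) hφ hx
end

section
/- Let k > −2 and l be real numbers, let σ be a real number, and set ν = (2l+1)/(k+2). Suppose y : (0,∞) → ℂ is twice differentiable and satisfies the Bessel equation z²·y″(z) + z·y′(z) + (z² − ν²)·y(z) = 0 for all z > 0. Define h : (0,∞) → ℂ by h(ξ) = ξ^{(1−2σ)/(2(k+2))} · y( 2·ξ^{1/2}/(k+2) ) (real powers of ξ). Then h is twice differentiable and, writing (D h)(ξ) = (k+2)·ξ·h′(ξ), one has for all ξ > 0: (D(D h))(ξ) + (2σ−1)·(D h)(ξ) + ( (σ−l−1)(σ+l) + ξ )·h(ξ) = 0. -/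
/-!
The Euler operator `θ = x d/dx` turns Bessel's equation into `θ²y + (z² - ν²) y = 0`. The weighted
power substitution `T : f ↦ x ^ a • f (b x ^ c)` satisfies `θ T = T (a + c θ)`, so
`(θ - a)² T = c² T θ²`, and hence `T y` solves Lommel's equation
`(θ - a)² h + c² (b² x ^ (2 c) - ν²) h = 0`. Multiplying by `(k + 2)²` and taking
`a = (1 - 2 σ) / (2 (k + 2))`, `b = 2 / (k + 2)`, `c = 1 / 2` gives the kernel equation for
`D = (k + 2) θ`.
-/

section BesselChangeOfVariables

open Set

variable {E : Type*} [NormedAddCommGroup E] [NormedSpace ℝ E] {f g y h : ℝ → E}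
  {a b c x ν : ℝ}

/-- The Euler operator `θ = x d/dx`, in terms of which Bessel's and Lommel's equations have
constant coefficients apart from the zeroth-order term. -/
noncomputable def eulerDeriv (f : ℝ → E) (x : ℝ) : E := x • deriv f x

theorem eulerDeriv_eqOn {s : Set ℝ} (hs : IsOpen s) (hfg : EqOn f g s) :
    EqOn (eulerDeriv f) (eulerDeriv g) s :=
  fun x hx ↦ congrArg (x • ·) (hfg.deriv hs hx)

theorem eulerDeriv_add (hf : DifferentiableAt ℝ f x) (hg : DifferentiableAt ℝ g x) :
    eulerDeriv (f + g) x = eulerDeriv f x + eulerDeriv g x := by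
  rw [eulerDeriv, deriv_add hf hg, smul_add, eulerDeriv, eulerDeriv]

theorem eulerDeriv_const_smul (r : ℝ) (f : ℝ → E) :
    eulerDeriv (r • f) = r • eulerDeriv f := by
  ext x
  rw [eulerDeriv, deriv_const_smul_field, Pi.smul_apply, eulerDeriv, smul_comm]

theorem eulerDeriv_eulerDeriv (hf : DifferentiableAt ℝ (deriv f) x) :
    eulerDeriv (eulerDeriv f) x = x ^ 2 • deriv (deriv f) x + x • deriv f x := by
  have hderiv : HasDerivAt (eulerDeriv f) (x • deriv (deriv f) x + (1 : ℝ) • deriv f x) x :=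
    (hasDerivAt_id x).smul hf.hasDerivAt
  rw [eulerDeriv, hderiv.deriv]
  module

theorem differentiableAt_eulerDeriv_iff (hx : x ≠ 0) :
    DifferentiableAt ℝ (eulerDeriv f) x ↔ DifferentiableAt ℝ (deriv f) x := by
  refine ⟨fun hf ↦ ?_, fun hf ↦ differentiableAt_id.smul hf⟩
  refine ((differentiableAt_inv hx).smul hf).congr_of_eventuallyEq ?_
  filter_upwards [isOpen_ne.mem_nhds hx] with t ht
  exact (inv_smul_smul₀ ht _).symm

/-- The weighted power substitution `f ↦ x ^ a • f (b x ^ c)`, which carries solutions of Bessel's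
equation to solutions of Lommel's equation. It is meant for `0 < x`; elsewhere it has the
conventional values of `Real.rpow`. -/
noncomputable def powerSubst (a b c : ℝ) (f : ℝ → E) (x : ℝ) : E := x ^ a • f (b * x ^ c)

theorem hasDerivAt_powerSubst (hx : x ≠ 0) (hf : DifferentiableAt ℝ f (b * x ^ c)) :
    HasDerivAt (powerSubst a b c f) (x⁻¹ • powerSubst a b c (a • f + c • eulerDeriv f) x) x := by
  have weight : HasDerivAt (fun t : ℝ ↦ t ^ a) (a * x ^ (a - 1)) x :=
    Real.hasDerivAt_rpow_const (.inl hx)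
  have argument : HasDerivAt (fun t : ℝ ↦ b * t ^ c) (b * (c * x ^ (c - 1))) x :=
    (Real.hasDerivAt_rpow_const (.inl hx)).const_mul b
  refine (weight.smul (hf.hasDerivAt.scomp x argument)).congr_deriv ?_
  simp only [powerSubst, eulerDeriv, Pi.add_apply, Pi.smul_apply, Function.comp_apply,
    Real.rpow_sub_one hx]
  module

theorem eulerDeriv_powerSubst (hx : x ≠ 0) (hf : DifferentiableAt ℝ f (b * x ^ c)) :
    eulerDeriv (powerSubst a b c f) x = powerSubst a b c (a • f + c • eulerDeriv f) x := by
  rw [eulerDeriv, (hasDerivAt_powerSubst hx hf).deriv, smul_inv_smul₀ hx]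

theorem eulerDeriv_powerSubst_eqOn (hb : 0 < b) (hf : ∀ z, 0 < z → DifferentiableAt ℝ f z) :
    EqOn (eulerDeriv (powerSubst a b c f)) (powerSubst a b c (a • f + c • eulerDeriv f)) (Ioi 0) :=
  fun x (hx : 0 < x) ↦ eulerDeriv_powerSubst hx.ne' (hf _ (by positivity))

theorem differentiableAt_deriv_powerSubst (hb : 0 < b)
    (hf : ∀ z, 0 < z → DifferentiableAt ℝ f z)
    (hf' : ∀ z, 0 < z → DifferentiableAt ℝ (deriv f) z) (hx : 0 < x) :
    DifferentiableAt ℝ (deriv (powerSubst a b c f)) x := by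
  have hz : 0 < b * x ^ c := by positivity
  have hθf := (differentiableAt_eulerDeriv_iff hz.ne').2 (hf' _ hz)
  rw [← differentiableAt_eulerDeriv_iff hx.ne']
  exact (hasDerivAt_powerSubst hx.ne'
    (((hf _ hz).const_smul a).add (hθf.const_smul c))).differentiableAt.congr_of_eventuallyEq
      ((eulerDeriv_powerSubst_eqOn hb hf).eventuallyEq_of_mem (Ioi_mem_nhds hx))

theorem eulerDeriv_eulerDeriv_powerSubst (hb : 0 < b)
    (hf : ∀ z, 0 < z → DifferentiableAt ℝ f z)
    (hf' : ∀ z, 0 < z → DifferentiableAt ℝ (deriv f) z) (hx : 0 < x) :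
    eulerDeriv (eulerDeriv (powerSubst a b c f)) x =
      powerSubst a b c
        (a ^ 2 • f + (2 * a * c) • eulerDeriv f + c ^ 2 • eulerDeriv (eulerDeriv f)) x := by
  have hz : 0 < b * x ^ c := by positivity
  have haf := (hf _ hz).const_smul a
  have hcθf := ((differentiableAt_eulerDeriv_iff hz.ne').2 (hf' _ hz)).const_smul c
  rw [eulerDeriv_eqOn isOpen_Ioi (eulerDeriv_powerSubst_eqOn hb hf) hx,
    eulerDeriv_powerSubst hx.ne' (haf.add hcθf)]
  simp only [powerSubst, Pi.add_apply, Pi.smul_apply, eulerDeriv_add haf hcθf,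
    eulerDeriv_const_smul]
  module

/-- Solutions of Bessel's equation of order `ν` on `(0, ∞)` with values in a real normed space;
nothing is required of `y` outside `(0, ∞)`. -/
structure IsBesselSolution (ν : ℝ) (y : ℝ → E) : Prop where
  differentiableAt : ∀ z, 0 < z → DifferentiableAt ℝ y z
  differentiableAt_deriv : ∀ z, 0 < z → DifferentiableAt ℝ (deriv y) z
  equation : ∀ z, 0 < z →
    z ^ 2 • deriv (deriv y) z + z • deriv y z + (z ^ 2 - ν ^ 2) • y z = 0

namespace IsBesselSolution

theorem eulerDeriv_eulerDeriv_eq (hy : IsBesselSolution ν y) (hx : 0 < x) :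
    eulerDeriv (eulerDeriv y) x = (ν ^ 2 - x ^ 2) • y x := by
  rw [eulerDeriv_eulerDeriv (hy.differentiableAt_deriv x hx)]
  linear_combination (norm := module) hy.equation x hx

theorem lommel_equation_powerSubst (hy : IsBesselSolution ν y) (hb : 0 < b) (hx : 0 < x) :
    eulerDeriv (eulerDeriv (powerSubst a b c y)) x - (2 * a) • eulerDeriv (powerSubst a b c y) x
      + (a ^ 2 + c ^ 2 * ((b * x ^ c) ^ 2 - ν ^ 2)) • powerSubst a b c y x = 0 := by
  have hz : 0 < b * x ^ c := by positivity
  rw [eulerDeriv_eulerDeriv_powerSubst hb hy.differentiableAt hy.differentiableAt_deriv hx,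
    eulerDeriv_powerSubst hx.ne' (hy.differentiableAt _ hz)]
  simp only [powerSubst, Pi.add_apply, Pi.smul_apply, hy.eulerDeriv_eulerDeriv_eq hz]
  module

end IsBesselSolution

theorem bessel_kernel_change_of_variables_general {k l σ : ℝ} (hk : -2 < k)
    (hν : ν = (2 * l + 1) / (k + 2)) (hy : IsBesselSolution ν y)
    (hh : ∀ ξ : ℝ, 0 < ξ →
      h ξ = ξ ^ ((1 - 2 * σ) / (2 * (k + 2))) • y (2 * ξ ^ ((1 : ℝ) / 2) / (k + 2)))
    {D : (ℝ → E) → ℝ → E} (hD : ∀ f ξ, D f ξ = ((k + 2) * ξ) • deriv f ξ) :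
    (∀ ξ : ℝ, 0 < ξ → DifferentiableAt ℝ h ξ ∧ DifferentiableAt ℝ (deriv h) ξ)
    ∧ ∀ ξ : ℝ, 0 < ξ →
        D (D h) ξ + (2 * σ - 1) • D h ξ + ((σ - l - 1) * (σ + l) + ξ) • h ξ = 0 := by
  have hk₂ : 0 < k + 2 := by linarith
  have hb : 0 < 2 / (k + 2) := by positivity
  have hD_euler (f : ℝ → E) : D f = (k + 2) • eulerDeriv f :=
    funext fun ξ ↦ (hD f ξ).trans (mul_smul ..)
  set a := (1 - 2 * σ) / (2 * (k + 2)) with ha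
  have h_eqOn : EqOn h (powerSubst a (2 / (k + 2)) (1 / 2) y) (Ioi 0) := fun ξ hξ ↦ by
    rw [hh ξ hξ, powerSubst, mul_div_right_comm]
  refine ⟨fun ξ hξ ↦ ⟨?_, ?_⟩, fun ξ hξ ↦ ?_⟩
  · exact (hasDerivAt_powerSubst hξ.ne' (hy.differentiableAt _ (by positivity))).differentiableAt
      |>.congr_of_eventuallyEq (h_eqOn.eventuallyEq_of_mem (Ioi_mem_nhds hξ))
  · exact (differentiableAt_deriv_powerSubst hb hy.differentiableAt hy.differentiableAt_deriv hξ)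
      |>.congr_of_eventuallyEq ((h_eqOn.deriv isOpen_Ioi).eventuallyEq_of_mem (Ioi_mem_nhds hξ))
  · have hθ := eulerDeriv_eqOn isOpen_Ioi h_eqOn
    have lommel := hy.lommel_equation_powerSubst (a := a) (c := 1 / 2) hb hξ
    rw [← eulerDeriv_eqOn isOpen_Ioi hθ hξ, ← hθ hξ, ← h_eqOn hξ, mul_pow,
      ← Real.sqrt_eq_rpow, Real.sq_sqrt hξ.le] at lommel
    simp only [hD_euler, eulerDeriv_const_smul, Pi.smul_apply]
    have first_order_coeff : (k + 2) ^ 2 * (2 * a) = (1 - 2 * σ) * (k + 2) := by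
      rw [ha]; field_simp
    have zeroth_order_coeff :
        (k + 2) ^ 2 * (a ^ 2 + (1 / 2) ^ 2 * ((2 / (k + 2)) ^ 2 * ξ - ν ^ 2)) =
          (σ - l - 1) * (σ + l) + ξ := by
      rw [ha, hν]; field_simp; ring
    linear_combination (norm := module) (k + 2) ^ 2 • lommel
      + first_order_coeff • eulerDeriv h ξ - zeroth_order_coeff • h ξ

end BesselChangeOfVariables

/-- Bessel change of variables (eq. (kernelbessel) of the paper, with `σ = α + j`): if `y`
solves the Bessel equation of order `ν = (2l+1)/(k+2)` on `(0,∞)`, then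
`h(ξ) = ξ^{(1−2σ)/(2(k+2))}·y(2√ξ/(k+2))` is twice differentiable on `(0,∞)` and lies in the
kernel of `D² + (2σ−1)D + (σ−l−1)(σ+l) + ξ`, where `(D h)(ξ) = (k+2)·ξ·h′(ξ)`. -/
theorem bessel_kernel_change_of_variables (k l σ : ℝ) (hk : -2 < k)
    (ν : ℝ) (hν : ν = (2 * l + 1) / (k + 2))
    (y : ℝ → ℂ)
    (hy₁ : ∀ z : ℝ, 0 < z → DifferentiableAt ℝ y z)
    (hy₂ : ∀ z : ℝ, 0 < z → DifferentiableAt ℝ (deriv y) z)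
    (hbessel : ∀ z : ℝ, 0 < z →
      (z : ℂ) ^ 2 * deriv (deriv y) z + (z : ℂ) * deriv y z
        + ((z : ℂ) ^ 2 - (ν : ℂ) ^ 2) * y z = 0)
    (h : ℝ → ℂ)
    (hh : ∀ ξ : ℝ, 0 < ξ →
      h ξ = ((ξ ^ ((1 - 2 * σ) / (2 * (k + 2))) : ℝ) : ℂ)
        * y (2 * ξ ^ ((1 : ℝ) / 2) / (k + 2)))
    (D : (ℝ → ℂ) → ℝ → ℂ)
    (hD : ∀ f : ℝ → ℂ, ∀ ξ : ℝ, D f ξ = (((k + 2) * ξ : ℝ) : ℂ) * deriv f ξ) :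
    (∀ ξ : ℝ, 0 < ξ → DifferentiableAt ℝ h ξ ∧ DifferentiableAt ℝ (deriv h) ξ)
    ∧ ∀ ξ : ℝ, 0 < ξ →
        D (D h) ξ + ((2 * σ - 1 : ℝ) : ℂ) * D h ξ
          + ((((σ - l - 1) * (σ + l) : ℝ) : ℂ) + (ξ : ℂ)) * h ξ = 0 := by
  simpa using bessel_kernel_change_of_variables_general hk hν
    ⟨hy₁, hy₂, by simpa using hbessel⟩ (by simpa using hh) (by simpa using hD)
end
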